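/- arXiv:1804.07662 — 3 statements merged into one kernel-verified Lean document; each statement's English description precedes it below -/
import Mathlib

section
/- The set A₀ = {β > 1 : the sequence of zero-run lengths (l_n(β))_{n≥1} in the β-expansion of 1 is bounded} is dense in (1, ∞) and has Hausdorff dimension 1. -/
open Filter MeasureTheory Set

/-- The β-transformation T_β(x) = βx − ⌊βx⌋. -/
noncomputable def betaT (β : ℝ) : ℝ → ℝ := fun x => β * x - ⌊β * x⌋

/-- The (i+1)-th digit of the β-expansion of x (0-indexed). -/
noncomputable def betaDigit (β x : ℝ) (i : ℕ) : ℤ := ⌊β * (betaT β)^[i] x⌋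

/-- A finite word is β-admissible if some x ∈ [0,1) has β-expansion beginning with it. -/
def IsAdmissibleWord (β : ℝ) (w : List ℤ) : Prop :=
  ∃ x ∈ Set.Ico (0:ℝ) 1, ∀ i (h : i < w.length), w.get ⟨i, h⟩ = betaDigit β x i

/-- An infinite sequence is β-admissible if it is the digit sequence of some x ∈ [0,1). -/
def IsAdmissibleSeq (β : ℝ) (e : ℕ → ℤ) : Prop :=
  ∃ x ∈ Set.Ico (0:ℝ) 1, ∀ i, e i = betaDigit β x i

/-- The basic interval (cylinder) of a word. -/
def cylinder (β : ℝ) (w : List ℤ) : Set ℝ :=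
  {x | x ∈ Set.Ico (0:ℝ) 1 ∧ ∀ i (h : i < w.length), betaDigit β x i = w.get ⟨i, h⟩}

/-- A basic interval is full if its length is β^{-n}. -/
def IsFull (β : ℝ) (w : List ℤ) : Prop :=
  volume (cylinder β w) = ENNReal.ofReal (1 / β ^ w.length)

-- The infinite β-expansion of 1: the periodic modification if the expansion of 1
-- terminates, and the expansion of 1 itself otherwise (0-indexed).
open Classical in
noncomputable def betaStar (β : ℝ) : ℕ → ℤ :=
  if h : ∃ n, betaDigit β 1 n ≠ 0 ∧ ∀ i, n < i → betaDigit β 1 i = 0 then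
    fun i =>
      if i % (h.choose + 1) = h.choose then betaDigit β 1 h.choose - 1
      else betaDigit β 1 (i % (h.choose + 1))
  else betaDigit β 1

/-- Strict lexicographic order on integer sequences. -/
def lexLt (a b : ℕ → ℤ) : Prop := ∃ n, (∀ i, i < n → a i = b i) ∧ a n < b n

/-- l_n(β): the length of the longest run of zeros following the n-th digit
(1-indexed position n) in the infinite β-expansion of 1. -/
noncomputable def zeroRunLen (β : ℝ) (n : ℕ) : ℕ∞ :=
  ⨆ k ∈ {k : ℕ | ∀ j, j < k → betaStar β (n + j) = 0}, (k : ℕ∞)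

/-- A₀: the set of bases β > 1 with bounded zero-runs in the expansion of 1. -/
def A0 : Set ℝ := {β | 1 < β ∧ ∃ C : ℕ, ∀ n, 1 ≤ n → zeroRunLen β n ≤ (C : ℕ∞)}

/-- The waiting time W_n^β(x,y): first k ≥ 1 with T_β^k x in the n-th basic interval of y. -/
noncomputable def waitingTime (β x y : ℝ) (n : ℕ) : ℕ∞ :=
  sInf {k : ℕ∞ | ∃ m : ℕ, k = (m : ℕ∞) ∧ 1 ≤ m ∧
    ∀ i, i < n → betaDigit β ((betaT β)^[m] x) i = betaDigit β y i}

/-- (log W_n^β(x,y)) / n as an extended real, with value ⊤ when W_n = ∞. -/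
noncomputable def waitingRatio (β x y : ℝ) (n : ℕ) : EReal :=
  if h : waitingTime β x y n = ⊤ then ⊤
  else (((Real.log ((waitingTime β x y n).untop h : ℕ)) / n : ℝ) : EReal)

/-!
Density: over an interval of bases on which no iterate `T_β^m 1` vanishes, the digits of `1` are
constant, because each is the floor of a continuous function omitting the integers. But two bases
whose expansions of `1` agree coincide, since their orbits separate exponentially. So simple Parry
numbers are dense, and their infinite expansion of `1` is periodic with nonzero leading digit.

Dimension: let `K_b` be the set of bases for which `1` has leading digit `b + 1` and all later
digits in `{1, …, b}`, so that no digit vanishes. By Parry's criterion every sequence over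
`{1, …, b}` occurs as such a tail. Reading the tail, with digits lowered by `1`, as a base-`b`
expansion maps `K_b` onto `[0, 1]`. If the tails of `β` and `γ` first differ at index `n`, their
images are within `b⁻ⁿ` of each other, while `|β - γ| ≥ (b + 2)⁻⁽ⁿ⁺³⁾`. The map is thus Hölder of
exponent `log b / log (b + 2)`, which tends to `1` as `b → ∞`.
-/

section Orbit

variable {β x : ℝ}

lemma betaT_eq_fract (β x : ℝ) : betaT β x = Int.fract (β * x) := rfl

lemma betaT_iterate_succ (β x : ℝ) (k : ℕ) :
    (betaT β)^[k + 1] x = β * (betaT β)^[k] x - betaDigit β x k := by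
  rw [Function.iterate_succ_apply']
  rfl

lemma betaT_iterate_succ_mem_Ico (β x : ℝ) (k : ℕ) : (betaT β)^[k + 1] x ∈ Ico (0 : ℝ) 1 := by
  rw [Function.iterate_succ_apply', betaT_eq_fract]
  exact ⟨Int.fract_nonneg _, Int.fract_lt_one _⟩

lemma betaT_iterate_mem_Icc (β : ℝ) (hx : x ∈ Icc (0 : ℝ) 1) (k : ℕ) :
    (betaT β)^[k] x ∈ Icc (0 : ℝ) 1 := by
  cases k with
  | zero => exact hx
  | succ k => exact Ico_subset_Icc_self (betaT_iterate_succ_mem_Ico β x k)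

lemma betaDigit_one_zero (β : ℝ) : betaDigit β 1 0 = ⌊β⌋ := by
  simp [betaDigit]

lemma betaDigit_one_zero_pos (hβ : 1 < β) : 0 < betaDigit β 1 0 := by
  rw [betaDigit_one_zero]
  exact Int.floor_pos.2 hβ.le

lemma betaDigit_betaT (β x : ℝ) (k : ℕ) : betaDigit β (betaT β x) k = betaDigit β x (k + 1) := rfl

lemma betaDigit_eq_zero_of_iterate_eq_zero {m k : ℕ} (hm : (betaT β)^[m] x = 0) (hk : m ≤ k) :
    betaDigit β x k = 0 := by
  have hfix : betaT β 0 = 0 := by simp [betaT]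
  obtain ⟨j, rfl⟩ := Nat.exists_eq_add_of_le' hk
  simp [betaDigit, Function.iterate_add_apply, hm, Function.iterate_fixed hfix]

lemma eq_zero_of_forall_betaDigit_eq_zero (hβ : 1 < β) (h : ∀ k, betaDigit β x k = 0) : x = 0 := by
  have hpow (k : ℕ) : (betaT β)^[k] x = β ^ k * x := by
    induction k with
    | zero => simp
    | succ k ih => rw [betaT_iterate_succ, h, ih, pow_succ']; simp [mul_assoc]
  have hbound (k : ℕ) : β ^ (k + 1) * x ∈ Ico (0 : ℝ) 1 :=
    hpow (k + 1) ▸ betaT_iterate_succ_mem_Ico β x k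
  have : 0 < β := by linarith
  have hx : 0 ≤ x := nonneg_of_mul_nonneg_right (hbound 0).1 (by positivity)
  refine hx.eq_of_not_lt' fun hx => ?_
  obtain ⟨k, hk⟩ := pow_unbounded_of_one_lt x⁻¹ hβ
  have hlt : β ^ k < β ^ (k + 1) := pow_lt_pow_right₀ hβ k.lt_succ_self
  have hone : 1 < β ^ (k + 1) * x := (inv_lt_iff_one_lt_mul₀ hx).1 (hk.trans hlt)
  exact hone.not_gt (hbound k).2

lemma betaDigit_eq_of_remainders {c : ℕ → ℤ} {t : ℕ → ℝ}
    (hrec : ∀ k, β * t k = c k + t (k + 1)) (ht : ∀ k, t (k + 1) ∈ Ico (0 : ℝ) 1) (k : ℕ) :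
    betaDigit β (t 0) k = c k := by
  have hfloor (k : ℕ) : ⌊β * t k⌋ = c k := by
    rw [hrec, Int.floor_intCast_add, Int.floor_eq_zero_iff.2 (ht k), add_zero]
  have horbit (k : ℕ) : (betaT β)^[k] (t 0) = t k := by
    induction k with
    | zero => rfl
    | succ k ih =>
      rw [Function.iterate_succ_apply', ih, betaT, hfloor, hrec, add_sub_cancel_left]
  rw [betaDigit, horbit, hfloor]

end Orbit

section ZeroRuns

variable {β : ℝ}

lemma mem_A0_of_forall_exists_betaStar_ne_zero (hβ : 1 < β) {C : ℕ}
    (h : ∀ n, ∃ j ≤ C, betaStar β (n + j) ≠ 0) : β ∈ A0 := by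
  refine ⟨hβ, C, fun n _ => iSup₂_le fun k hk => ?_⟩
  obtain ⟨j, hjC, hj⟩ := h n
  have hkj : k ≤ j := not_lt.1 fun hjk => hj (hk j hjk)
  exact_mod_cast hkj.trans hjC

lemma betaStar_eq_betaDigit_of_forall_ne_zero (h : ∀ i, betaDigit β 1 i ≠ 0) :
    betaStar β = betaDigit β 1 := by
  rw [betaStar, dif_neg]
  rintro ⟨n, -, hn⟩
  exact h (n + 1) (hn (n + 1) n.lt_succ_self)

lemma periodic_betaStar
    (h : ∃ n, betaDigit β 1 n ≠ 0 ∧ ∀ i, n < i → betaDigit β 1 i = 0) :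
    Function.Periodic (betaStar β) (h.choose + 1) := by
  intro i
  simp only [betaStar, dif_pos h, Nat.add_mod_right]

lemma betaStar_zero_ne_zero (hβ : 1 < β) : betaStar β 0 ≠ 0 := by
  by_cases h : ∃ n, betaDigit β 1 n ≠ 0 ∧ ∀ i, n < i → betaDigit β 1 i = 0
  · rw [betaStar, dif_pos h, Nat.zero_mod]
    split_ifs with hlast
    · rw [← hlast, Ne, sub_eq_zero]
      intro hdigit
      have htail (k : ℕ) : betaDigit β (betaT β 1) k = 0 := by
        rw [betaDigit_betaT]
        exact h.choose_spec.2 (k + 1) (by omega)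
      have hT : betaT β 1 = β - betaDigit β 1 0 := by simp [betaT, betaDigit]
      rw [eq_zero_of_forall_betaDigit_eq_zero hβ htail, hdigit] at hT
      push_cast at hT
      linarith
    · exact (betaDigit_one_zero_pos hβ).ne'
  · rw [betaStar, dif_neg h]
    exact (betaDigit_one_zero_pos hβ).ne'

end ZeroRuns

section SimpleParry

/-- The simple Parry numbers: the bases `β > 1` for which the greedy expansion of `1` is finite,
expressed by the orbit of `1` under `T_β` reaching `0`. -/
def simpleParryNumbers : Set ℝ := {β | 1 < β ∧ ∃ m, (betaT β)^[m] 1 = 0}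

lemma exists_last_betaDigit_ne_zero {β : ℝ} (hβ : β ∈ simpleParryNumbers) :
    ∃ n, betaDigit β 1 n ≠ 0 ∧ ∀ i, n < i → betaDigit β 1 i = 0 := by
  classical
  obtain ⟨hβ, m, hm⟩ := hβ
  have hzero : betaDigit β 1 0 ≠ 0 := (betaDigit_one_zero_pos hβ).ne'
  refine ⟨Nat.findGreatest (betaDigit β 1 · ≠ 0) m,
    Nat.findGreatest_spec (P := (betaDigit β 1 · ≠ 0)) m.zero_le hzero, fun i hi => ?_⟩
  rcases le_total m i with hmi | him
  · exact betaDigit_eq_zero_of_iterate_eq_zero hm hmi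
  · exact not_not.1 (Nat.findGreatest_is_greatest hi him)

lemma simpleParryNumbers_subset_A0 : simpleParryNumbers ⊆ A0 := by
  intro β hβ
  have hfin := exists_last_betaDigit_ne_zero hβ
  set p := hfin.choose + 1
  have hper : Function.Periodic (betaStar β) p := periodic_betaStar hfin
  refine mem_A0_of_forall_exists_betaStar_ne_zero hβ.1 (C := p) fun n =>
    ⟨p - n % p, Nat.sub_le _ _, ?_⟩
  have hmod : n % p < p := Nat.mod_lt n (Nat.succ_pos _)
  have hmul : n + (p - n % p) = (n / p + 1) * p := by
    rw [add_mul, one_mul, mul_comm]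
    have := Nat.div_add_mod n p
    omega
  rw [hmul, ← Nat.cast_id (n / p + 1), hper.nat_mul_eq]
  exact betaStar_zero_ne_zero hβ.1

lemma floor_eq_floor_of_isPreconnected {X : Type*} [TopologicalSpace X] {S : Set X} {f : X → ℝ}
    (hS : IsPreconnected S) (hf : ContinuousOn f S) (hint : ∀ z ∈ S, ∀ n : ℤ, f z ≠ n)
    {x y : X} (hx : x ∈ S) (hy : y ∈ S) : ⌊f x⌋ = ⌊f y⌋ := by
  wlog hlt : ⌊f x⌋ < ⌊f y⌋ generalizing x y
  · rcases (not_lt.1 hlt).eq_or_lt with heq | hgt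
    · exact heq.symm
    · exact (this hy hx hgt).symm
  obtain ⟨z, hz, hfz⟩ :=
    hS.intermediate_value hx hy hf ⟨(Int.floor_lt.1 hlt).le, Int.floor_le (f y)⟩
  exact absurd hfz (hint z hz _)

lemma betaDigit_eq_of_forall_iterate_ne_zero {S : Set ℝ} {x : ℝ} (hS : IsPreconnected S)
    (h : ∀ β ∈ S, ∀ m, (betaT β)^[m] x ≠ 0) {β γ : ℝ} (hβ : β ∈ S) (hγ : γ ∈ S) (n : ℕ) :
    betaDigit β x n = betaDigit γ x n := by
  have hdigit (n : ℕ) (hcont : ContinuousOn (fun β => (betaT β)^[n] x) S) {β γ : ℝ}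
      (hβ : β ∈ S) (hγ : γ ∈ S) : betaDigit β x n = betaDigit γ x n := by
    refine floor_eq_floor_of_isPreconnected hS (continuousOn_id.mul hcont)
      (fun δ hδ k hk => h δ hδ (n + 1) ?_) hβ hγ
    rw [Function.iterate_succ_apply', betaT_eq_fract]
    exact (congrArg Int.fract hk).trans (Int.fract_intCast k)
  have hcont (n : ℕ) : ContinuousOn (fun β => (betaT β)^[n] x) S := by
    induction n with
    | zero => exact continuousOn_const
    | succ n ih =>
      have hstep : ContinuousOn (fun δ => δ * (betaT δ)^[n] x - betaDigit β x n) S :=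
        (continuousOn_id.mul ih).sub continuousOn_const
      exact hstep.congr fun δ hδ => by rw [betaT_iterate_succ, hdigit n ih hδ hβ]
  exact hdigit n (hcont n) hβ hγ

lemma pow_mul_le_iterate_sub_iterate {a b x : ℝ} (ha : 0 ≤ a) (hab : a ≤ b)
    (h : ∀ k, betaDigit a x k = betaDigit b x k) (n : ℕ) :
    a ^ n * ((b - a) * x) ≤ (betaT b)^[n + 1] x - (betaT a)^[n + 1] x := by
  induction n with
  | zero =>
    rw [betaT_iterate_succ, betaT_iterate_succ, h]
    simp [sub_mul]
  | succ n ih =>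
    have hpos : 0 ≤ (b - a) * (betaT b)^[n + 1] x :=
      mul_nonneg (sub_nonneg.2 hab) (betaT_iterate_succ_mem_Ico b x n).1
    calc a ^ (n + 1) * ((b - a) * x) = a * (a ^ n * ((b - a) * x)) := by ring
      _ ≤ a * ((betaT b)^[n + 1] x - (betaT a)^[n + 1] x) := by gcongr
      _ ≤ b * (betaT b)^[n + 1] x - a * (betaT a)^[n + 1] x := by linarith
      _ = (betaT b)^[n + 1 + 1] x - (betaT a)^[n + 1 + 1] x := by
        rw [betaT_iterate_succ b x (n + 1), betaT_iterate_succ a x (n + 1), h]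
        ring

lemma exists_betaDigit_ne {a b x : ℝ} (ha : 1 < a) (hab : a < b) (hx : 0 < x) :
    ∃ k, betaDigit a x k ≠ betaDigit b x k := by
  by_contra! h
  have hgap : 0 < (b - a) * x := mul_pos (sub_pos.2 hab) hx
  obtain ⟨n, hn⟩ := pow_unbounded_of_one_lt ((b - a) * x)⁻¹ ha
  have hone : 1 < a ^ n * ((b - a) * x) := (inv_lt_iff_one_lt_mul₀ hgap).1 hn
  have hle := pow_mul_le_iterate_sub_iterate (by linarith) hab.le h n
  linarith [(betaT_iterate_succ_mem_Ico a x n).1, (betaT_iterate_succ_mem_Ico b x n).2]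

lemma exists_betaT_iterate_eq_zero {a b x : ℝ} (ha : 1 < a) (hab : a < b) (hx : 0 < x) :
    ∃ β ∈ Icc a b, ∃ m, (betaT β)^[m] x = 0 := by
  by_contra! h
  obtain ⟨k, hk⟩ := exists_betaDigit_ne ha hab hx
  exact hk (betaDigit_eq_of_forall_iterate_ne_zero isPreconnected_Icc h
    (left_mem_Icc.2 hab.le) (right_mem_Icc.2 hab.le) k)

lemma Ioi_one_subset_closure_simpleParryNumbers : Ioi (1 : ℝ) ⊆ closure simpleParryNumbers := by
  intro a ha
  refine Metric.mem_closure_iff.2 fun ε hε => ?_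
  obtain ⟨β, hβ, hm⟩ := exists_betaT_iterate_eq_zero (b := a + ε / 2) ha (by linarith) one_pos
  refine ⟨β, ⟨lt_of_lt_of_le ha hβ.1, hm⟩, ?_⟩
  rw [Real.dist_eq, abs_lt]
  constructor <;> linarith [hβ.1, hβ.2]

end SimpleParry

section ParryExistence

variable {β : ℝ} {c : ℕ → ℤ} {M : ℤ}

/-- The value `∑ cᵢ β^{-(i+1)}` of the digit string `0.c₀c₁c₂…` in the real base `β`. -/
noncomputable def digitSeries (β : ℝ) (c : ℕ → ℤ) : ℝ := ∑' i, c i * β⁻¹ ^ (i + 1)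

lemma hasSum_const_mul_inv_pow_succ (hβ : 1 < β) (r : ℝ) :
    HasSum (fun i : ℕ => r * β⁻¹ ^ (i + 1)) (r / (β - 1)) := by
  have hgeom := hasSum_geometric_of_lt_one (inv_nonneg.2 (by linarith)) (inv_lt_one_of_one_lt₀ hβ)
  convert! hgeom.mul_left (r * β⁻¹) using 1
  · ext i
    ring
  · have : β ≠ 0 := by linarith
    have : β - 1 ≠ 0 := by linarith
    field_simp

lemma digitSeries_term_mem_Icc (hβ : 1 < β) (hc : ∀ i, c i ∈ Icc 0 M) (i : ℕ) :
    c i * β⁻¹ ^ (i + 1) ∈ Icc 0 (M * β⁻¹ ^ (i + 1)) := by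
  have : 0 < β := by linarith
  have h0 : (0 : ℝ) ≤ c i := by exact_mod_cast (hc i).1
  have hM : (c i : ℝ) ≤ M := by exact_mod_cast (hc i).2
  exact ⟨by positivity, by gcongr⟩

lemma summable_digitSeries (hβ : 1 < β) (hc : ∀ i, c i ∈ Icc 0 M) :
    Summable fun i => c i * β⁻¹ ^ (i + 1) :=
  (hasSum_const_mul_inv_pow_succ hβ M).summable.of_nonneg_of_le
    (fun i => (digitSeries_term_mem_Icc hβ hc i).1) fun i => (digitSeries_term_mem_Icc hβ hc i).2

lemma digitSeries_nonneg (hβ : 1 < β) (hc : ∀ i, c i ∈ Icc 0 M) : 0 ≤ digitSeries β c :=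
  tsum_nonneg fun i => (digitSeries_term_mem_Icc hβ hc i).1

lemma digitSeries_pos (hβ : 1 < β) (hc : ∀ i, c i ∈ Icc 0 M) (hc0 : 0 < c 0) :
    0 < digitSeries β c := by
  have : 0 < β := by linarith
  have : (0 : ℝ) < c 0 := by exact_mod_cast hc0
  exact (summable_digitSeries hβ hc).tsum_pos
    (fun i => (digitSeries_term_mem_Icc hβ hc i).1) 0 (by positivity)

lemma digitSeries_le (hβ : 1 < β) (hc : ∀ i, c i ∈ Icc 0 M) : digitSeries β c ≤ M / (β - 1) := by
  rw [← (hasSum_const_mul_inv_pow_succ hβ M).tsum_eq]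
  exact (summable_digitSeries hβ hc).tsum_le_tsum
    (fun i => (digitSeries_term_mem_Icc hβ hc i).2) (hasSum_const_mul_inv_pow_succ hβ M).summable

lemma mul_digitSeries (hβ : 1 < β) (hc : ∀ i, c i ∈ Icc 0 M) :
    β * digitSeries β c = c 0 + digitSeries β fun i => c (i + 1) := by
  have hβ0 : β ≠ 0 := by linarith
  rw [digitSeries, (summable_digitSeries hβ hc).tsum_eq_zero_add, mul_add, ← tsum_mul_left,
    digitSeries]
  congr 1
  · simp only [zero_add, pow_one]
    field_simp
  · refine tsum_congr fun i => ?_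
    rw [pow_succ _ (i + 1)]
    field_simp

lemma continuousOn_digitSeries {r : ℝ} (hr : 1 < r) (hc : ∀ i, c i ∈ Icc 0 M) :
    ContinuousOn (fun β => digitSeries β c) (Ici r) := by
  have hM : (0 : ℝ) ≤ M := by exact_mod_cast (hc 0).1.trans (hc 0).2
  refine continuousOn_tsum (fun i => ?_) (hasSum_const_mul_inv_pow_succ hr M).summable
    fun i β hβ => ?_
  · refine continuousOn_const.mul ((continuousOn_id.inv₀ fun β hβ => ?_).pow _)
    exact (one_pos.trans (hr.trans_le hβ)).ne'
  · have hrβ : r ≤ β := hβ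
    obtain ⟨hnonneg, hle⟩ := digitSeries_term_mem_Icc (hr.trans_le hrβ) hc i
    rw [Real.norm_of_nonneg hnonneg]
    have hβ0 : 0 ≤ β⁻¹ := inv_nonneg.2 (by linarith)
    exact hle.trans (by gcongr)

lemma digitSeries_lt_one (hβ : M < β) (hc : ∀ i, c i ∈ Ico 0 M) : digitSeries β c < 1 := by
  have hM : (1 : ℝ) ≤ M := by exact_mod_cast (hc 0).1.trans_lt (hc 0).2
  have hc' (i : ℕ) : c i ∈ Icc 0 (M - 1) := ⟨(hc i).1, Int.le_sub_one_of_lt (hc i).2⟩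
  refine (digitSeries_le (by linarith) hc').trans_lt ?_
  rw [div_lt_one (by linarith)]
  push_cast
  linarith

variable {e : ℕ → ℤ}

lemma mem_Icc_of_forall_succ_mem_Ico (he : ∀ i, e (i + 1) ∈ Ico 0 (e 0)) (i : ℕ) :
    e i ∈ Icc 0 (e 0) := by
  cases i with
  | zero => exact right_mem_Icc.2 ((he 0).1.trans (he 0).2.le)
  | succ i => exact Ico_subset_Icc_self (he i)

lemma exists_digitSeries_eq_one (he : ∀ i, e (i + 1) ∈ Ico 0 (e 0)) (he1 : 0 < e 1) :
    ∃ β : ℝ, e 0 < β ∧ digitSeries β e = 1 := by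
  have hdigits := mem_Icc_of_forall_succ_mem_Ico he
  have ha : (1 : ℝ) < e 0 := by exact_mod_cast (Int.add_one_le_of_lt he1).trans_lt (he 0).2
  have hleft : 1 < digitSeries (e 0) e := by
    have hrec := mul_digitSeries ha hdigits
    have hpos := digitSeries_pos ha (fun i => hdigits (i + 1)) he1
    nlinarith
  have hright : digitSeries (e 0 + 1) e < 1 := by
    have hrec := mul_digitSeries (β := e 0 + 1) (by linarith) hdigits
    have hlt := digitSeries_lt_one (β := e 0 + 1) (by linarith) he
    nlinarith
  obtain ⟨β, hβ, hβ1⟩ := intermediate_value_Ioo' (by linarith)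
    ((continuousOn_digitSeries ha hdigits).mono Icc_subset_Ici_self) ⟨hright, hleft⟩
  exact ⟨β, hβ.1, hβ1⟩

-- A special case of Parry's criterion: a leading digit exceeding all later ones makes every
-- proper shift of `e` lexicographically smaller than `e`.
lemma exists_forall_betaDigit_one_eq (he : ∀ i, e (i + 1) ∈ Ico 0 (e 0)) (he1 : 0 < e 1) :
    ∃ β, ∀ i, betaDigit β 1 i = e i := by
  obtain ⟨β, hβ, hβ1⟩ := exists_digitSeries_eq_one he he1
  have hdigits := mem_Icc_of_forall_succ_mem_Ico he
  have hβ_one : 1 < β :=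
    hβ.trans' (by exact_mod_cast (Int.add_one_le_of_lt he1).trans_lt (he 0).2)
  set t : ℕ → ℝ := fun k => digitSeries β fun i => e (i + k)
  have hrec (k : ℕ) : β * t k = e k + t (k + 1) := by
    simpa only [t, zero_add, add_right_comm, ← add_assoc] using
      mul_digitSeries hβ_one (c := fun i => e (i + k)) fun i => hdigits (i + k)
  have ht (k : ℕ) : t (k + 1) ∈ Ico (0 : ℝ) 1 :=
    ⟨digitSeries_nonneg hβ_one fun i => hdigits (i + (k + 1)),
      digitSeries_lt_one hβ fun i => he (i + k)⟩
  have ht0 : t 0 = 1 := hβ1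
  exact ⟨β, fun i => ht0 ▸ betaDigit_eq_of_remainders hrec ht i⟩

end ParryExistence

section Separation

variable {β γ x B : ℝ} {n : ℕ}

lemma abs_mul_sub_mul_le {u v : ℝ} (hu : |u| ≤ 1) (hγ : |γ| ≤ B) :
    |β * u - γ * v| ≤ |β - γ| + B * |u - v| :=
  calc |β * u - γ * v| = |(β - γ) * u + γ * (u - v)| := by ring_nf
    _ ≤ |β - γ| * |u| + |γ| * |u - v| := by
      rw [← abs_mul, ← abs_mul]
      exact abs_add_le _ _
    _ ≤ |β - γ| + B * |u - v| := by
      gcongr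
      exact mul_le_of_le_one_right (abs_nonneg _) hu

lemma abs_mul_iterate_sub_mul_iterate_le (hx : x ∈ Icc (0 : ℝ) 1) (hγ : |γ| ≤ B) (k : ℕ) :
    |β * (betaT β)^[k] x - γ * (betaT γ)^[k] x| ≤
      |β - γ| + B * |(betaT β)^[k] x - (betaT γ)^[k] x| := by
  obtain ⟨h0, h1⟩ := betaT_iterate_mem_Icc β hx k
  exact abs_mul_sub_mul_le (by rwa [abs_of_nonneg h0]) hγ

-- Adding `|β - γ|` to the distance of the orbits makes the estimate propagate with factor `B`.
lemma abs_sub_add_abs_iterate_sub_iterate_le (hx : x ∈ Icc (0 : ℝ) 1) (hγ : |γ| ≤ B)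
    (hB : 2 ≤ B) (h : ∀ i < n, betaDigit β x i = betaDigit γ x i) :
    |β - γ| + |(betaT β)^[n] x - (betaT γ)^[n] x| ≤ |β - γ| * B ^ n := by
  induction n with
  | zero => simp
  | succ n ih =>
    specialize ih fun i hi => h i (by omega)
    have hmul := abs_mul_iterate_sub_mul_iterate_le (β := β) hx hγ n
    rw [betaT_iterate_succ, betaT_iterate_succ, h n n.lt_succ_self, sub_sub_sub_cancel_right]
    calc |β - γ| + |β * (betaT β)^[n] x - γ * (betaT γ)^[n] x|
        ≤ 2 * |β - γ| + B * |(betaT β)^[n] x - (betaT γ)^[n] x| := by linarith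
      _ ≤ B * (|β - γ| + |(betaT β)^[n] x - (betaT γ)^[n] x|) := by
        rw [mul_add]
        gcongr
      _ ≤ B * (|β - γ| * B ^ n) := by gcongr
      _ = |β - γ| * B ^ (n + 1) := by ring

lemma inv_le_mul_iterate_sub_mul_iterate (hγ : 0 < γ)
    (hlt : betaDigit β x n < betaDigit γ x n) (hpos : 0 < betaDigit γ x (n + 1)) :
    γ⁻¹ ≤ γ * (betaT γ)^[n] x - β * (betaT β)^[n] x := by
  have hlt' : (betaDigit β x n : ℝ) + 1 ≤ betaDigit γ x n := by exact_mod_cast hlt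
  have hpos' : (1 : ℝ) ≤ betaDigit γ x (n + 1) := by exact_mod_cast hpos
  have hnext : γ⁻¹ ≤ (betaT γ)^[n + 1] x := by
    rw [inv_le_iff_one_le_mul₀' hγ]
    linarith [betaT_iterate_succ γ x (n + 1), (betaT_iterate_succ_mem_Ico γ x (n + 1)).1]
  linarith [betaT_iterate_succ β x n, betaT_iterate_succ γ x n,
    (betaT_iterate_succ_mem_Ico β x n).2]

lemma one_le_abs_sub_mul_pow_of_betaDigit_lt (hx : x ∈ Icc (0 : ℝ) 1) (hγ : γ ∈ Ioc 0 B)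
    (hB : 2 ≤ B) (heq : ∀ i < n, betaDigit β x i = betaDigit γ x i)
    (hlt : betaDigit β x n < betaDigit γ x n) (hpos : 0 < betaDigit γ x (n + 1)) :
    1 ≤ |β - γ| * B ^ (n + 2) := by
  have hγB : |γ| ≤ B := by
    rw [abs_of_pos hγ.1]
    exact hγ.2
  have hB0 : 0 < B := by linarith
  have hinv : B⁻¹ ≤ |β - γ| * B ^ (n + 1) :=
    calc B⁻¹ ≤ γ⁻¹ := inv_anti₀ hγ.1 hγ.2
      _ ≤ γ * (betaT γ)^[n] x - β * (betaT β)^[n] x :=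
        inv_le_mul_iterate_sub_mul_iterate hγ.1 hlt hpos
      _ ≤ |β * (betaT β)^[n] x - γ * (betaT γ)^[n] x| := by
        rw [abs_sub_comm]
        exact le_abs_self _
      _ ≤ |β - γ| + B * |(betaT β)^[n] x - (betaT γ)^[n] x| :=
        abs_mul_iterate_sub_mul_iterate_le hx hγB n
      _ ≤ B * (|β - γ| + |(betaT β)^[n] x - (betaT γ)^[n] x|) := by
        rw [mul_add]
        gcongr
        exact le_mul_of_one_le_left (abs_nonneg _) (by linarith)
      _ ≤ B * (|β - γ| * B ^ n) := by
        gcongr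
        exact abs_sub_add_abs_iterate_sub_iterate_le hx hγB hB heq
      _ = |β - γ| * B ^ (n + 1) := by ring
  rw [inv_le_iff_one_le_mul₀ hB0] at hinv
  rwa [pow_succ _ (n + 1), ← mul_assoc]

lemma one_le_abs_sub_mul_pow_of_betaDigit_ne (hx : x ∈ Icc (0 : ℝ) 1) (hβ : β ∈ Ioc 0 B)
    (hγ : γ ∈ Ioc 0 B) (hB : 2 ≤ B) (heq : ∀ i < n, betaDigit β x i = betaDigit γ x i)
    (hne : betaDigit β x n ≠ betaDigit γ x n) (hβpos : 0 < betaDigit β x (n + 1))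
    (hγpos : 0 < betaDigit γ x (n + 1)) : 1 ≤ |β - γ| * B ^ (n + 2) := by
  rcases hne.lt_or_gt with hlt | hgt
  · exact one_le_abs_sub_mul_pow_of_betaDigit_lt hx hγ hB heq hlt hγpos
  · rw [abs_sub_comm]
    exact one_le_abs_sub_mul_pow_of_betaDigit_lt hx hβ hB (fun i hi => (heq i hi).symm) hgt hβpos

end Separation

section Holder

lemma inv_pow_le_rpow_logb {b B δ : ℝ} (hb : 1 ≤ b) (hB : 1 < B) {m : ℕ} (h : 1 ≤ δ * B ^ m) :
    (b ^ m)⁻¹ ≤ δ ^ Real.logb B b := by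
  have hB0 : 0 < B := by linarith
  calc (b ^ m)⁻¹ = ((B ^ Real.logb B b) ^ m)⁻¹ := by
        rw [Real.rpow_logb hB0 hB.ne' (by linarith)]
    _ = ((B ^ m)⁻¹) ^ Real.logb B b := by
        rw [Real.inv_rpow (by positivity), Real.rpow_pow_comm hB0.le]
    _ ≤ δ ^ Real.logb B b :=
        Real.rpow_le_rpow (by positivity) ((inv_le_iff_one_le_mul₀ (by positivity)).2 h)
          (Real.logb_nonneg hB hb)

lemma holderOnWith_of_dist_le {X Y : Type*} [PseudoMetricSpace X] [PseudoMetricSpace Y]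
    {C r : NNReal} {f : X → Y} {S : Set X}
    (h : ∀ x ∈ S, ∀ y ∈ S, dist (f x) (f y) ≤ C * dist x y ^ (r : ℝ)) : HolderOnWith C r f S := by
  intro x hx y hy
  rw [edist_dist, edist_dist, ENNReal.ofReal_rpow_of_nonneg dist_nonneg r.coe_nonneg,
    ← ENNReal.ofReal_coe_nnreal, ← ENNReal.ofReal_mul C.coe_nonneg]
  exact ENNReal.ofReal_le_ofReal (h x hx y hy)

end Holder

section CantorSet

/-- The Cantor set `K_b` of bases for which the expansion of `1` has leading digit `b + 1` and all
later digits in `{1, …, b}`. -/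
def parryCantorSet (b : ℕ) : Set ℝ :=
  {β | betaDigit β 1 0 = b + 1 ∧ ∀ i, betaDigit β 1 (i + 1) ∈ Icc (1 : ℤ) b}

/-- The tail of the expansion of `1` in base `β`, with digits shifted from `{1, …, b}` to `Fin b`;
meaningful only for `β ∈ parryCantorSet b`. -/
noncomputable def parryCode (b : ℕ) [NeZero b] (β : ℝ) : ℕ → Fin b :=
  fun i => Fin.ofNat b (betaDigit β 1 (i + 1) - 1).toNat

variable {b : ℕ} {β γ : ℝ}

lemma betaDigit_one_pos_of_mem_parryCantorSet (hβ : β ∈ parryCantorSet b) (i : ℕ) :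
    0 < betaDigit β 1 i := by
  cases i with
  | zero => rw [hβ.1]; omega
  | succ i => exact (hβ.2 i).1

lemma mem_Ico_of_mem_parryCantorSet (hβ : β ∈ parryCantorSet b) :
    β ∈ Ico ((b : ℝ) + 1) (b + 2) := by
  have hfloor : ⌊β⌋ = b + 1 := betaDigit_one_zero β ▸ hβ.1
  obtain ⟨hle, hlt⟩ := Int.floor_eq_iff.1 hfloor
  push_cast at hle hlt
  exact ⟨hle, by linarith⟩

lemma parryCantorSet_subset_A0 (b : ℕ) : parryCantorSet b ⊆ A0 := by
  intro β hβ
  have hne (i : ℕ) : betaDigit β 1 i ≠ 0 := (betaDigit_one_pos_of_mem_parryCantorSet hβ i).ne'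
  have hb : (1 : ℝ) ≤ b := by exact_mod_cast (hβ.2 0).1.trans (hβ.2 0).2
  have hβ1 : 1 < β := by linarith [(mem_Ico_of_mem_parryCantorSet hβ).1]
  refine mem_A0_of_forall_exists_betaStar_ne_zero hβ1 (C := 0) fun n => ⟨0, le_rfl, ?_⟩
  rw [betaStar_eq_betaDigit_of_forall_ne_zero hne]
  exact hne n

variable [NeZero b]

lemma parryCode_add_one (hβ : β ∈ parryCantorSet b) (i : ℕ) :
    ((parryCode b β i : ℕ) : ℤ) + 1 = betaDigit β 1 (i + 1) := by
  obtain ⟨hle, hlt⟩ := hβ.2 i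
  rw [parryCode, Fin.val_ofNat, Nat.mod_eq_of_lt (by omega)]
  omega

lemma exists_mem_parryCantorSet_parryCode_eq (d : ℕ → Fin b) :
    ∃ β ∈ parryCantorSet b, parryCode b β = d := by
  let e : ℕ → ℤ
    | 0 => b + 1
    | i + 1 => (d i : ℕ) + 1
  have hlead : e 0 = b + 1 := rfl
  have htail (i : ℕ) : e (i + 1) = (d i : ℕ) + 1 := rfl
  have hlt (i : ℕ) : (d i : ℕ) < b := (d i).isLt
  obtain ⟨β, hβ⟩ := exists_forall_betaDigit_one_eq (e := e)
    (fun i => by rw [htail, hlead, mem_Ico]; have := hlt i; omega)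
    (by rw [htail 0]; omega)
  have hmem : β ∈ parryCantorSet b :=
    ⟨hβ 0, fun i => by rw [hβ, htail, mem_Icc]; have := hlt i; omega⟩
  refine ⟨β, hmem, funext fun i => Fin.ext ?_⟩
  have hcode := parryCode_add_one hmem i
  rw [hβ, htail] at hcode
  omega

lemma one_le_abs_sub_mul_pow_of_parryCode_ne (hβ : β ∈ parryCantorSet b)
    (hγ : γ ∈ parryCantorSet b) {n : ℕ} (heq : ∀ i < n, parryCode b β i = parryCode b γ i)
    (hne : parryCode b β n ≠ parryCode b γ n) : 1 ≤ |β - γ| * ((b : ℝ) + 2) ^ (n + 3) := by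
  have hIoc {δ : ℝ} (hδ : δ ∈ parryCantorSet b) : δ ∈ Ioc 0 ((b : ℝ) + 2) := by
    obtain ⟨hle, hlt⟩ := mem_Ico_of_mem_parryCantorSet hδ
    exact ⟨lt_of_lt_of_le (by positivity) hle, hlt.le⟩
  refine one_le_abs_sub_mul_pow_of_betaDigit_ne (right_mem_Icc.2 zero_le_one) (hIoc hβ) (hIoc hγ)
    (by simp) (fun i hi => ?_) ?_ (betaDigit_one_pos_of_mem_parryCantorSet hβ _)
    (betaDigit_one_pos_of_mem_parryCantorSet hγ _)
  · cases i with
    | zero => rw [hβ.1, hγ.1]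
    | succ i => rw [← parryCode_add_one hβ, ← parryCode_add_one hγ, heq i (by omega)]
  · rw [← parryCode_add_one hβ, ← parryCode_add_one hγ]
    exact fun h => hne (Fin.ext (by omega))

lemma abs_ofDigits_parryCode_sub_le (hβ : β ∈ parryCantorSet b)
    (hγ : γ ∈ parryCantorSet b) :
    |Real.ofDigits (parryCode b β) - Real.ofDigits (parryCode b γ)| ≤
      b ^ 3 * |β - γ| ^ Real.logb (b + 2) b := by
  classical
  have hb : (1 : ℝ) ≤ b := Nat.one_le_cast.2 NeZero.one_le
  by_cases hcode : parryCode b β = parryCode b γ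
  · rw [hcode, sub_self, abs_zero]
    positivity
  have hex : ∃ n, parryCode b β n ≠ parryCode b γ n := Function.ne_iff.1 hcode
  set n := Nat.find hex
  have heq (i : ℕ) (hi : i < n) : parryCode b β i = parryCode b γ i :=
    not_not.1 (Nat.find_min hex hi)
  have hsep := one_le_abs_sub_mul_pow_of_parryCode_ne hβ hγ heq (Nat.find_spec hex)
  calc |Real.ofDigits (parryCode b β) - Real.ofDigits (parryCode b γ)|
      ≤ ((b : ℝ) ^ n)⁻¹ := Real.abs_ofDigits_sub_ofDigits_le heq
    _ = b ^ 3 * ((b : ℝ) ^ (n + 3))⁻¹ := by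
      rw [pow_add]
      field_simp
    _ ≤ b ^ 3 * |β - γ| ^ Real.logb (b + 2) b := by
      gcongr
      exact inv_pow_le_rpow_logb hb (by linarith) hsep

variable (b) in
lemma holderOnWith_ofDigits_parryCode :
    HolderOnWith ((b : NNReal) ^ 3) (Real.logb (b + 2) b).toNNReal
      (fun β => Real.ofDigits (parryCode b β)) (parryCantorSet b) := by
  have hb : (1 : ℝ) ≤ b := Nat.one_le_cast.2 NeZero.one_le
  refine holderOnWith_of_dist_le fun β hβ γ hγ => ?_
  rw [Real.coe_toNNReal _ (Real.logb_nonneg (by linarith) hb), Real.dist_eq, Real.dist_eq]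
  exact_mod_cast abs_ofDigits_parryCode_sub_le hβ hγ

lemma Icc_subset_image_ofDigits_parryCode (hb : 1 < b) :
    Icc (0 : ℝ) 1 ⊆ (fun β => Real.ofDigits (parryCode b β)) '' parryCantorSet b := by
  intro z hz
  obtain ⟨d, -, hd⟩ := Real.ofDigits_SurjOn hb hz
  obtain ⟨β, hβ, hcode⟩ := exists_mem_parryCantorSet_parryCode_eq d
  exact ⟨β, hβ, by rw [← hd, ← hcode]⟩

end CantorSet

section HausdorffDimension

lemma ofReal_logb_le_dimH_parryCantorSet {b : ℕ} (hb : 1 < b) :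
    ENNReal.ofReal (Real.logb (b + 2) b) ≤ dimH (parryCantorSet b) := by
  have : NeZero b := ⟨by omega⟩
  have hb' : (1 : ℝ) < b := by exact_mod_cast hb
  have hpos : 0 < (Real.logb (b + 2) b).toNNReal :=
    Real.toNNReal_pos.2 (Real.logb_pos (by linarith) hb')
  have hIcc : dimH (Icc (0 : ℝ) 1) = 1 := by
    rw [Real.dimH_of_nonempty_interior (by simp), Module.finrank_self, Nat.cast_one]
  have hdim : 1 ≤ dimH (parryCantorSet b) / (Real.logb (b + 2) b).toNNReal :=
    calc 1 = dimH (Icc (0 : ℝ) 1) := hIcc.symm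
      _ ≤ _ := dimH_mono (Icc_subset_image_ofDigits_parryCode hb)
      _ ≤ _ := (holderOnWith_ofDigits_parryCode b).dimH_image_le hpos
  rwa [ENNReal.le_div_iff_mul_le (.inl (by exact_mod_cast hpos.ne')) (.inl ENNReal.coe_ne_top),
    one_mul] at hdim

open Asymptotics in
lemma tendsto_logb_add_const_self (a : ℝ) :
    Tendsto (fun x : ℝ => Real.logb (x + a) x) atTop (nhds 1) := by
  have hadd : (fun x : ℝ => x) ~[atTop] fun x => x + a :=
    (IsEquivalent.refl.add_isLittleO (isLittleO_const_id_atTop a)).symm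
  have htop : Tendsto (fun x : ℝ => x + a) atTop atTop :=
    tendsto_atTop_add_const_right _ a tendsto_id
  have hlog := hadd.log htop
  refine ((isEquivalent_iff_tendsto_one ?_).1 hlog).congr fun x => ?_
  · exact (Real.tendsto_log_atTop.comp htop).eventually_ne_atTop 0
  · exact Real.log_div_log

lemma one_le_dimH_A0 : 1 ≤ dimH A0 := by
  have hlim : Tendsto (fun b : ℕ => ENNReal.ofReal (Real.logb (b + 2) b)) atTop (nhds 1) := by
    rw [← ENNReal.ofReal_one]
    exact ENNReal.tendsto_ofReal
      ((tendsto_logb_add_const_self 2).comp tendsto_natCast_atTop_atTop)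
  refine le_of_tendsto hlim ((eventually_gt_atTop 1).mono fun b hb => ?_)
  exact (ofReal_logb_le_dimH_parryCantorSet hb).trans (dimH_mono (parryCantorSet_subset_A0 b))

end HausdorffDimension

/-- A₀ is dense in (1, ∞) and has Hausdorff dimension 1. -/
theorem A0_dense_and_dimH : Set.Ioi (1:ℝ) ⊆ closure A0 ∧ dimH A0 = 1 :=
  ⟨Ioi_one_subset_closure_simpleParryNumbers.trans (closure_mono simpleParryNumbers_subset_A0),
    le_antisymm ((dimH_mono (subset_univ A0)).trans Real.dimH_univ.le) one_le_dimH_A0⟩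
end

section
/- Let β be in the set A₀ (bases with bounded zero-runs in the expansion of 1), let M be as in the full-word lemma, and for n ≥ 1, m ≥ M let V_{n,m}^β be the set of x ∈ [0,1) whose β-expansion digit sequence is an infinite concatenation of blocks of the form (ε_1,…,ε_n,0^m) with (ε_1,…,ε_n) β-admissible. Then dim_H V_{n,m}^β ≥ n/(n+m). -/
open Filter MeasureTheory Set

/-- V_{n,m}^β: points of [0,1) whose digit sequence is an infinite concatenation of
blocks (ε₁,…,εₙ,0^m) with (ε₁,…,εₙ) admissible. -/
def Vnm (β : ℝ) (n m : ℕ) : Set ℝ :=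
  {x | x ∈ Set.Ico (0:ℝ) 1 ∧ ∀ i : ℕ,
    IsAdmissibleWord β (List.ofFn fun j : Fin n => betaDigit β x ((n + m) * i + j)) ∧
    ∀ j, n ≤ j → j < n + m → betaDigit β x ((n + m) * i + j) = 0}

/-!
Inserting a block `0^m` after every `n` digits of a β-expansion is an increasing map `zeroInsert`
from `[0, 1)` to `Vnm β n m`. By the choice of `M`, a basic interval of order `(n + m) * k` around a
point of its image is full, so has length `β⁻¹ ^ ((n + m) * k)`, while the basic intervals of order
`n * k` have length at most `β⁻¹ ^ (n * k)`.

Hence, if `2 * β⁻¹ ^ (n * k) ≤ z - y`, then a full basic interval of order `(n + m) * k` lies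
between the images of `y` and `z`, namely the one around the image of their midpoint. This makes the
inverse of `zeroInsert` Hölder of exponent `n / (n + m)`, and its image `[0, 1)` has dimension `1`.
-/

theorem mul_dimH_le_dimH_image {X Y : Type*} [EMetricSpace X] [EMetricSpace Y] {f : X → Y}
    {s : Set X} {C r : NNReal} (hr : 0 < r)
    (h : ∀ x ∈ s, ∀ y ∈ s, edist x y ≤ C * edist (f x) (f y) ^ (r : ℝ)) :
    r * dimH s ≤ dimH (f '' s) := by
  rcases isEmpty_or_nonempty X with _ | _
  · simp [s.eq_empty_of_isEmpty]
  have hinj : InjOn f s := fun x hx y hy hxy => by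
    simpa [hxy, ENNReal.zero_rpow_of_pos (NNReal.coe_pos.2 hr)] using h x hx y hy
  have hinv : LeftInvOn (Function.invFunOn f s) f s := hinj.leftInvOn_invFunOn
  have hholder : HolderOnWith C r (Function.invFunOn f s) (f '' s) := by
    rintro _ ⟨x, hx, rfl⟩ _ ⟨y, hy, rfl⟩
    rw [hinv hx, hinv hy]
    exact h x hx y hy
  have hdim : dimH s ≤ dimH (f '' s) / r := by
    simpa only [hinv.image_image] using hholder.dimH_image_le hr
  rw [mul_comm]
  exact ENNReal.mul_le_of_le_div hdim

theorem le_mul_rpow_of_forall_pow_le {a b s d e : ℝ} (ha₀ : 0 < a) (ha₁ : a < 1) (hb : 0 ≤ b)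
    (hs : 0 ≤ s) (hab : b ^ s = a) (hd₀ : 0 < d) (hd₁ : d ≤ 1)
    (h : ∀ k : ℕ, 2 * a ^ k ≤ d → b ^ k ≤ e) : d ≤ 2 * a⁻¹ * e ^ s := by
  obtain ⟨k, hk_lt, hk_le⟩ :=
    exists_nat_pow_near_of_lt_one (half_pos hd₀) (by linarith) ha₀ ha₁
  have hbe : b ^ (k + 1) ≤ e := h (k + 1) (by linarith)
  calc d ≤ 2 * a ^ k := by linarith
    _ = 2 * a⁻¹ * a ^ (k + 1) := by rw [pow_succ']; field_simp
    _ = 2 * a⁻¹ * (b ^ (k + 1)) ^ s := by rw [← hab, Real.rpow_pow_comm hb]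
    _ ≤ 2 * a⁻¹ * e ^ s := by gcongr

section Words

variable {β x y : ℝ} {k : ℕ}

theorem betaT_mem_Ico (β x : ℝ) : betaT β x ∈ Ico (0 : ℝ) 1 :=
  ⟨Int.fract_nonneg (β * x), Int.fract_lt_one (β * x)⟩

theorem iterate_betaT_mem_Ico (β : ℝ) (hx : x ∈ Ico (0 : ℝ) 1) (k : ℕ) :
    (betaT β)^[k] x ∈ Ico (0 : ℝ) 1 := by
  cases k with
  | zero => exact hx
  | succ k => exact Function.iterate_succ_apply' (betaT β) k x ▸ betaT_mem_Ico β _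

theorem betaDigit_add (β x : ℝ) (k j : ℕ) :
    betaDigit β x (k + j) = betaDigit β ((betaT β)^[k] x) j := by
  rw [betaDigit, betaDigit, add_comm k j, Function.iterate_add_apply]

theorem betaDigit_succ (β x : ℝ) (j : ℕ) :
    betaDigit β x (j + 1) = betaDigit β (betaT β x) j := by
  rw [betaDigit, betaDigit, Function.iterate_succ_apply]

theorem betaDigit_nonneg (hβ : 0 ≤ β) (hx : x ∈ Ico (0 : ℝ) 1) (j : ℕ) :
    0 ≤ betaDigit β x j :=
  Int.floor_nonneg.2 (mul_nonneg hβ (iterate_betaT_mem_Ico β hx j).1)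

/-- The word formed by the first `k` digits of the β-expansion of `x`. -/
noncomputable def betaWord (β x : ℝ) (k : ℕ) : List ℤ :=
  List.ofFn fun j : Fin k => betaDigit β x j

@[simp]
theorem length_betaWord (β x : ℝ) (k : ℕ) : (betaWord β x k).length = k :=
  List.length_ofFn

theorem betaWord_eq_iff : betaWord β x k = betaWord β y k ↔
    ∀ j < k, betaDigit β x j = betaDigit β y j := by
  simp [betaWord, List.ofFn_inj, funext_iff, Fin.forall_iff]

theorem betaWord_add (β x : ℝ) (k l : ℕ) :
    betaWord β x (k + l) = betaWord β x k ++ betaWord β ((betaT β)^[k] x) l := by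
  simp [betaWord, List.ofFn_add, betaDigit_add]

theorem mem_cylinder_iff {w : List ℤ} :
    x ∈ cylinder β w ↔ x ∈ Ico (0 : ℝ) 1 ∧ betaWord β x w.length = w := by
  simp [_root_.cylinder, betaWord, List.ext_getElem_iff]

theorem mem_cylinder_betaWord_iff : y ∈ cylinder β (betaWord β x k) ↔
    y ∈ Ico (0 : ℝ) 1 ∧ betaWord β y k = betaWord β x k := by
  rw [mem_cylinder_iff, length_betaWord]

theorem mem_cylinder_append_iff {w v : List ℤ} : x ∈ cylinder β (w ++ v) ↔
    x ∈ cylinder β w ∧ (betaT β)^[w.length] x ∈ cylinder β v := by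
  simp only [mem_cylinder_iff, List.length_append, betaWord_add]
  constructor
  · rintro ⟨hx, hword⟩
    obtain ⟨hw, hv⟩ := List.append_inj hword (by simp [betaWord])
    exact ⟨⟨hx, hw⟩, iterate_betaT_mem_Ico β hx _, hv⟩
  · rintro ⟨⟨hx, hw⟩, -, hv⟩
    rw [hw, hv]
    exact ⟨hx, rfl⟩

theorem isAdmissibleWord_iff_nonempty_cylinder {w : List ℤ} :
    IsAdmissibleWord β w ↔ (cylinder β w).Nonempty := by
  simp only [IsAdmissibleWord, _root_.cylinder, Set.Nonempty, mem_ofPred_eq, eq_comm]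

theorem isAdmissibleWord_betaWord (hx : x ∈ Ico (0 : ℝ) 1) (k : ℕ) :
    IsAdmissibleWord β (betaWord β x k) :=
  isAdmissibleWord_iff_nonempty_cylinder.2 ⟨x, mem_cylinder_betaWord_iff.2 ⟨hx, rfl⟩⟩

end Words

section Truncation

variable {β x y : ℝ} {k l : ℕ}

/-- The β-expansion of `x` truncated after `k` digits; for `x ∈ [0, 1)` this is the left endpoint
of the basic interval of order `k` around `x`. -/
noncomputable def betaTrunc (β x : ℝ) (k : ℕ) : ℝ :=
  ∑ j ∈ Finset.range k, betaDigit β x j * β⁻¹ ^ (j + 1)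

theorem betaTrunc_succ (β x : ℝ) (k : ℕ) :
    betaTrunc β x (k + 1) = β⁻¹ * (betaDigit β x 0 + betaTrunc β (betaT β x) k) := by
  simp only [betaTrunc, Finset.sum_range_succ', betaDigit_succ, pow_succ' β⁻¹, pow_zero, mul_add,
    Finset.mul_sum, mul_one, mul_left_comm β⁻¹]
  ring

theorem betaTrunc_congr (h : betaWord β x k = betaWord β y k) :
    betaTrunc β x k = betaTrunc β y k :=
  Finset.sum_congr rfl fun j hj => by rw [betaWord_eq_iff.1 h j (Finset.mem_range.1 hj)]

theorem betaTrunc_nonneg (hβ : 0 ≤ β) (hx : x ∈ Ico (0 : ℝ) 1) (k : ℕ) : 0 ≤ betaTrunc β x k :=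
  Finset.sum_nonneg fun j _ =>
    mul_nonneg (Int.cast_nonneg (betaDigit_nonneg hβ hx j)) (by positivity)

theorem betaTrunc_add_pow_mul_iterate (hβ : β ≠ 0) (x : ℝ) (k : ℕ) :
    betaTrunc β x k + β⁻¹ ^ k * (betaT β)^[k] x = x := by
  induction k generalizing x with
  | zero => simp [betaTrunc]
  | succ k ih =>
    have hdigit : betaDigit β x 0 + betaT β x = β * x := by simp [betaDigit, betaT]
    calc betaTrunc β x (k + 1) + β⁻¹ ^ (k + 1) * (betaT β)^[k + 1] x
        = β⁻¹ * (betaDigit β x 0 +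
            (betaTrunc β (betaT β x) k + β⁻¹ ^ k * (betaT β)^[k] (betaT β x))) := by
          rw [betaTrunc_succ, Function.iterate_succ_apply]; ring
      _ = x := by rw [ih, hdigit, inv_mul_cancel_left₀ hβ]

theorem betaTrunc_le (hβ : 0 < β) (hx : x ∈ Ico (0 : ℝ) 1) (k : ℕ) : betaTrunc β x k ≤ x := by
  have htail : 0 ≤ β⁻¹ ^ k * (betaT β)^[k] x :=
    mul_nonneg (by positivity) (iterate_betaT_mem_Ico β hx k).1
  linarith [betaTrunc_add_pow_mul_iterate hβ.ne' x k]

theorem betaTrunc_mem_Ico (hβ : 0 < β) (hx : x ∈ Ico (0 : ℝ) 1) (k : ℕ) :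
    betaTrunc β x k ∈ Ico (0 : ℝ) 1 :=
  ⟨betaTrunc_nonneg hβ.le hx k, (betaTrunc_le hβ hx k).trans_lt hx.2⟩

theorem betaWord_eq_of_mem_Icc (hβ : 0 < β) (hx : x ∈ Ico (0 : ℝ) 1)
    (hy : y ∈ Icc (betaTrunc β x k) x) : betaWord β y k = betaWord β x k := by
  induction k generalizing x y with
  | zero => simp [betaWord]
  | succ k ih =>
    have hTx : betaT β x ∈ Ico (0 : ℝ) 1 := betaT_mem_Ico β x
    have hxT : β * x = ⌊β * x⌋ + betaT β x := by simp [betaT]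
    have hlower : ⌊β * x⌋ + betaTrunc β (betaT β x) k ≤ β * y := by
      have := mul_le_mul_of_nonneg_left hy.1 hβ.le
      rwa [betaTrunc_succ, mul_inv_cancel_left₀ hβ.ne'] at this
    have hupper : β * y ≤ β * x := mul_le_mul_of_nonneg_left hy.2 hβ.le
    have hfloor : ⌊β * y⌋ = ⌊β * x⌋ := by
      rw [Int.floor_eq_iff]
      constructor <;> linarith [betaTrunc_nonneg hβ.le hTx k, hTx.2]
    have hyT : betaT β y = β * y - ⌊β * x⌋ := by rw [betaT, hfloor]
    have htail : betaWord β (betaT β y) k = betaWord β (betaT β x) k :=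
      ih hTx ⟨by linarith, by linarith⟩
    rw [betaWord_eq_iff] at htail ⊢
    rintro (_ | j) hj
    · exact hfloor
    · rw [betaDigit_succ, betaDigit_succ, htail j (by lia)]

theorem betaWord_betaTrunc (hβ : 0 < β) (hx : x ∈ Ico (0 : ℝ) 1) (k : ℕ) :
    betaWord β (betaTrunc β x k) k = betaWord β x k :=
  betaWord_eq_of_mem_Icc hβ hx ⟨le_rfl, betaTrunc_le hβ hx k⟩

theorem iterate_betaT_betaTrunc (hβ : 0 < β) (hx : x ∈ Ico (0 : ℝ) 1) (hkl : k ≤ l) :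
    (betaT β)^[l] (betaTrunc β x k) = 0 := by
  have hk : (betaT β)^[k] (betaTrunc β x k) = 0 := by
    have := betaTrunc_add_pow_mul_iterate hβ.ne' (betaTrunc β x k) k
    rw [betaTrunc_congr (betaWord_betaTrunc hβ hx k)] at this
    simpa [hβ.ne'] using this
  rw [← Nat.sub_add_cancel hkl, Function.iterate_add_apply, hk]
  exact Function.iterate_fixed (by simp [betaT]) _

theorem betaDigit_betaTrunc_of_le (hβ : 0 < β) (hx : x ∈ Ico (0 : ℝ) 1) (hkl : k ≤ l) :
    betaDigit β (betaTrunc β x k) l = 0 := by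
  simp [betaDigit, iterate_betaT_betaTrunc hβ hx hkl]

theorem betaTrunc_betaTrunc_of_le (hβ : 0 < β) (hx : x ∈ Ico (0 : ℝ) 1) (hkl : k ≤ l) :
    betaTrunc β (betaTrunc β x k) l = betaTrunc β x k := by
  simpa [iterate_betaT_betaTrunc hβ hx hkl] using
    betaTrunc_add_pow_mul_iterate hβ.ne' (betaTrunc β x k) l

theorem betaTrunc_mono (hβ : 0 < β) (hx : x ∈ Ico (0 : ℝ) 1) (hy : y ∈ Ico (0 : ℝ) 1)
    (hxy : x ≤ y) (k : ℕ) : betaTrunc β x k ≤ betaTrunc β y k := by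
  by_contra! hlt
  have hword : betaWord β (betaTrunc β x k) k = betaWord β y k :=
    betaWord_eq_of_mem_Icc hβ hy ⟨hlt.le, (betaTrunc_le hβ hx k).trans hxy⟩
  rw [betaWord_betaTrunc hβ hx] at hword
  exact hlt.ne' (betaTrunc_congr hword)

theorem exists_le_betaTrunc (hβ : 1 < β) {t : ℝ} (ht : t ∈ Ico (0 : ℝ) 1) :
    ∃ s ∈ Ico (0 : ℝ) 1, ∃ k, t ≤ betaTrunc β s k := by
  obtain ⟨s, hts, hs1⟩ := exists_between ht.2
  have hs : s ∈ Ico (0 : ℝ) 1 := ⟨ht.1.trans hts.le, hs1⟩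
  obtain ⟨k, hk⟩ := exists_pow_lt_of_lt_one (sub_pos.2 hts) (inv_lt_one_of_one_lt₀ hβ)
  have htail : β⁻¹ ^ k * (betaT β)^[k] s ≤ β⁻¹ ^ k :=
    mul_le_of_le_one_right (by positivity) (iterate_betaT_mem_Ico β hs k).2.le
  exact ⟨s, hs, k, by linarith [betaTrunc_add_pow_mul_iterate (zero_lt_one.trans hβ).ne' s k]⟩

end Truncation

section FullCylinders

variable {β x y : ℝ} {k : ℕ}

/-- The basic interval of order `k` around `x` is full. In contrast to `IsFull`, which prescribes
its length, this says that it exhausts `[betaTrunc β x k, betaTrunc β x k + β⁻¹ ^ k)`. -/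
def HasFullCylinder (β x : ℝ) (k : ℕ) : Prop :=
  Ico (betaTrunc β x k) (betaTrunc β x k + β⁻¹ ^ k) ⊆ cylinder β (betaWord β x k)

namespace HasFullCylinder

theorem betaTrunc_add_pow_le_one (h : HasFullCylinder β x k) (hβ : 0 < β)
    (hx : x ∈ Ico (0 : ℝ) 1) : betaTrunc β x k + β⁻¹ ^ k ≤ 1 := by
  by_contra! hlt
  exact (h ⟨(betaTrunc_mem_Ico hβ hx k).2.le, hlt⟩).1.2.false

theorem betaTrunc_add_pow_le_betaTrunc (h : HasFullCylinder β x k) (hβ : 0 < β)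
    (hy : y ∈ Ico (0 : ℝ) 1) (hlt : betaTrunc β x k < betaTrunc β y k) :
    betaTrunc β x k + β⁻¹ ^ k ≤ betaTrunc β y k := by
  by_contra! hgap
  have hword := (mem_cylinder_betaWord_iff.1 (h ⟨hlt.le, hgap⟩)).2
  rw [betaWord_betaTrunc hβ hy] at hword
  exact hlt.ne' (betaTrunc_congr hword)

theorem betaWord_and_iterate_betaT (h : HasFullCylinder β x k) (hβ : 0 < β) {t : ℝ}
    (ht : t ∈ Ico (0 : ℝ) 1) :
    betaWord β (betaTrunc β x k + β⁻¹ ^ k * t) k = betaWord β x k ∧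
      (betaT β)^[k] (betaTrunc β x k + β⁻¹ ^ k * t) = t := by
  have hpow : 0 < β⁻¹ ^ k := by positivity
  have hword : betaWord β (betaTrunc β x k + β⁻¹ ^ k * t) k = betaWord β x k :=
    (mem_cylinder_betaWord_iff.1 <| h ⟨le_add_of_nonneg_right (mul_nonneg hpow.le ht.1),
      (add_lt_add_iff_left _).2 (mul_lt_of_lt_one_right hpow ht.2)⟩).2
  refine ⟨hword, ?_⟩
  have hsplit := betaTrunc_add_pow_mul_iterate hβ.ne' (betaTrunc β x k + β⁻¹ ^ k * t) k
  rw [betaTrunc_congr hword] at hsplit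
  exact mul_left_cancel₀ hpow.ne' (add_left_cancel hsplit)

end HasFullCylinder

theorem hasFullCylinder_of_betaDigit_eq_zero (hβ : 1 < β) {M : ℕ}
    (hM : ∀ w : List ℤ, IsAdmissibleWord β w → ∀ η : List ℤ, IsAdmissibleWord β η →
      IsAdmissibleWord β (w ++ List.replicate M 0 ++ η))
    (hx : x ∈ Ico (0 : ℝ) 1) (hzero : ∀ j < M, betaDigit β x (k + j) = 0) :
    HasFullCylinder β x (k + M) := by
  intro p hp
  have hβ₀ : 0 < β := zero_lt_one.trans hβ
  have hpow : 0 < β⁻¹ ^ (k + M) := by positivity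
  obtain ⟨t, rfl⟩ : ∃ t, p = betaTrunc β x (k + M) + β⁻¹ ^ (k + M) * t :=
    ⟨(p - betaTrunc β x (k + M)) / β⁻¹ ^ (k + M), by field_simp; ring⟩
  have ht : t ∈ Ico (0 : ℝ) 1 :=
    ⟨nonneg_of_mul_nonneg_right (le_add_iff_nonneg_right _ |>.1 hp.1) hpow,
      (mul_lt_iff_lt_one_right hpow).1 ((add_lt_add_iff_left _).1 hp.2)⟩
  obtain ⟨s, hs, l, hts⟩ := exists_le_betaTrunc hβ ht
  have hpad : betaWord β x k ++ List.replicate M 0 = betaWord β x (k + M) := by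
    rw [betaWord_add, List.append_cancel_left_eq, betaWord, ← List.ofFn_const, List.ofFn_inj]
    exact funext fun j => by rw [← betaDigit_add, hzero j j.2]
  -- A point of the basic interval that `T ^ (k + M)` maps above `t` lies to the right of `p`.
  obtain ⟨z, hz⟩ := isAdmissibleWord_iff_nonempty_cylinder.1 <|
    hM _ (isAdmissibleWord_betaWord hx k) _ (isAdmissibleWord_betaWord hs l)
  rw [hpad, mem_cylinder_append_iff, mem_cylinder_betaWord_iff, mem_cylinder_betaWord_iff,
    length_betaWord] at hz
  obtain ⟨⟨hz, hzx⟩, hTz, hTzs⟩ := hz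
  have htz : t ≤ (betaT β)^[k + M] z :=
    hts.trans (betaTrunc_congr hTzs ▸ betaTrunc_le hβ₀ hTz l)
  rw [← betaTrunc_congr hzx] at hp ⊢
  have hpz : betaTrunc β z (k + M) + β⁻¹ ^ (k + M) * t ≤ z := by
    conv_rhs => rw [← betaTrunc_add_pow_mul_iterate hβ₀.ne' z (k + M)]
    gcongr
  rw [mem_cylinder_betaWord_iff, ← hzx]
  exact ⟨⟨(betaTrunc_nonneg hβ₀.le hz _).trans hp.1, hpz.trans_lt hz.2⟩,
    betaWord_eq_of_mem_Icc hβ₀ hz ⟨hp.1, hpz⟩⟩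

theorem hasFullCylinder_betaTrunc (hβ : 1 < β) {M : ℕ}
    (hM : ∀ w : List ℤ, IsAdmissibleWord β w → ∀ η : List ℤ, IsAdmissibleWord β η →
      IsAdmissibleWord β (w ++ List.replicate M 0 ++ η))
    {m : ℕ} (hm : M ≤ m) (n : ℕ) (hx : x ∈ Ico (0 : ℝ) 1) :
    HasFullCylinder β (betaTrunc β x n) (n + m) := by
  have hβ₀ : 0 < β := zero_lt_one.trans hβ
  rw [show n + m = n + m - M + M by lia]
  exact hasFullCylinder_of_betaDigit_eq_zero hβ hM (betaTrunc_mem_Ico hβ₀ hx n)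
    fun j _ => betaDigit_betaTrunc_of_le hβ₀ hx (by lia)

end FullCylinders

section ZeroInsert

variable {β x y z : ℝ} {n m : ℕ}

/-- The value of the first `k` blocks of `zeroInsert β n m y`. -/
noncomputable def zeroInsertPartial (β : ℝ) (n m k : ℕ) (y : ℝ) : ℝ :=
  ∑ i ∈ Finset.range k, (β⁻¹ ^ (n + m)) ^ i * betaTrunc β ((betaT β)^[n * i] y) n

/-- The number whose β-expansion should be that of `y` with a block `0^m` inserted after every `n`
digits: the `i`-th block of `n` digits of `y` is moved to position `(n + m) * i`. -/
noncomputable def zeroInsert (β : ℝ) (n m : ℕ) (y : ℝ) : ℝ :=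
  ∑' i, (β⁻¹ ^ (n + m)) ^ i * betaTrunc β ((betaT β)^[n * i] y) n

theorem zeroInsertPartial_succ (β : ℝ) (n m k : ℕ) (y : ℝ) : zeroInsertPartial β n m (k + 1) y =
    betaTrunc β y n + β⁻¹ ^ (n + m) * zeroInsertPartial β n m k ((betaT β)^[n] y) := by
  rw [zeroInsertPartial, Finset.sum_range_succ', add_comm, zeroInsertPartial, Finset.mul_sum]
  simp only [pow_zero, one_mul, mul_zero, Function.iterate_zero_apply, pow_succ', mul_assoc,
    Nat.mul_succ, Function.iterate_add_apply]

theorem zeroInsert_term_nonneg (hβ : 0 ≤ β) (hy : y ∈ Ico (0 : ℝ) 1) (i : ℕ) :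
    0 ≤ (β⁻¹ ^ (n + m)) ^ i * betaTrunc β ((betaT β)^[n * i] y) n :=
  mul_nonneg (by positivity) (betaTrunc_nonneg hβ (iterate_betaT_mem_Ico β hy _) n)

theorem zeroInsertPartial_nonneg (hβ : 0 ≤ β) (hy : y ∈ Ico (0 : ℝ) 1) (k : ℕ) :
    0 ≤ zeroInsertPartial β n m k y :=
  Finset.sum_nonneg fun i _ => zeroInsert_term_nonneg hβ hy i

theorem zeroInsertPartial_le (hβ : 1 ≤ β) (hy : y ∈ Ico (0 : ℝ) 1) (k : ℕ) :
    zeroInsertPartial β n m k y ≤ y := by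
  have hβ₀ : 0 < β := zero_lt_one.trans_le hβ
  induction k generalizing y with
  | zero => simpa [zeroInsertPartial] using hy.1
  | succ k ih =>
    have hTy : (betaT β)^[n] y ∈ Ico (0 : ℝ) 1 := iterate_betaT_mem_Ico β hy n
    calc zeroInsertPartial β n m (k + 1) y
        = betaTrunc β y n + β⁻¹ ^ (n + m) * zeroInsertPartial β n m k ((betaT β)^[n] y) :=
          zeroInsertPartial_succ ..
      _ ≤ betaTrunc β y n + β⁻¹ ^ n * (betaT β)^[n] y := by
          refine add_le_add_right (mul_le_mul ?_ (ih hTy) ?_ (by positivity)) _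
          · exact pow_le_pow_of_le_one (by positivity) (inv_le_one_of_one_le₀ hβ) (by lia)
          · exact zeroInsertPartial_nonneg hβ₀.le hTy k
      _ = y := betaTrunc_add_pow_mul_iterate hβ₀.ne' y n

theorem summable_zeroInsert (hβ : 1 ≤ β) (hy : y ∈ Ico (0 : ℝ) 1) :
    Summable fun i => (β⁻¹ ^ (n + m)) ^ i * betaTrunc β ((betaT β)^[n * i] y) n :=
  summable_of_sum_range_le (zeroInsert_term_nonneg (by linarith) hy) (zeroInsertPartial_le hβ hy)

theorem zeroInsert_mem_Ico (hβ : 1 ≤ β) (hy : y ∈ Ico (0 : ℝ) 1) :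
    zeroInsert β n m y ∈ Ico (0 : ℝ) 1 :=
  ⟨tsum_nonneg (zeroInsert_term_nonneg (by linarith) hy),
    (Real.tsum_le_of_sum_range_le (zeroInsert_term_nonneg (by linarith) hy)
      (zeroInsertPartial_le hβ hy)).trans_lt hy.2⟩

theorem zeroInsert_eq (hβ : 1 ≤ β) (hy : y ∈ Ico (0 : ℝ) 1) : zeroInsert β n m y =
    betaTrunc β y n + β⁻¹ ^ (n + m) * zeroInsert β n m ((betaT β)^[n] y) := by
  rw [zeroInsert, (summable_zeroInsert hβ hy).tsum_eq_zero_add]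
  simp only [zeroInsert, ← tsum_mul_left, pow_zero, one_mul, mul_zero,
    Function.iterate_zero_apply, pow_succ', mul_assoc, Nat.mul_succ, Function.iterate_add_apply]

theorem zeroInsertPartial_le_zeroInsert (hβ : 1 ≤ β) (hy : y ∈ Ico (0 : ℝ) 1) (k : ℕ) :
    zeroInsertPartial β n m k y ≤ zeroInsert β n m y :=
  (summable_zeroInsert hβ hy).sum_le_tsum _ fun i _ => zeroInsert_term_nonneg (by linarith) hy i

theorem zeroInsert_le_zeroInsertPartial_add_pow (hβ : 1 ≤ β) (hy : y ∈ Ico (0 : ℝ) 1) (k : ℕ) :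
    zeroInsert β n m y ≤ zeroInsertPartial β n m k y + (β⁻¹ ^ (n + m)) ^ k := by
  induction k generalizing y with
  | zero => simpa [zeroInsertPartial] using (zeroInsert_mem_Ico hβ hy).2.le
  | succ k ih =>
    rw [zeroInsert_eq hβ hy, zeroInsertPartial_succ, pow_succ', add_assoc, ← mul_add]
    gcongr
    exact ih (iterate_betaT_mem_Ico β hy n)

section Full

variable (hfull : ∀ y ∈ Ico (0 : ℝ) 1, HasFullCylinder β (betaTrunc β y n) (n + m))
include hfull

theorem betaWord_zeroInsert_and_iterate_betaT (hβ : 1 ≤ β) (hy : y ∈ Ico (0 : ℝ) 1) :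
    betaWord β (zeroInsert β n m y) (n + m) = betaWord β (betaTrunc β y n) (n + m) ∧
      (betaT β)^[n + m] (zeroInsert β n m y) = zeroInsert β n m ((betaT β)^[n] y) := by
  have hβ₀ : 0 < β := zero_lt_one.trans_le hβ
  have h := (hfull y hy).betaWord_and_iterate_betaT hβ₀
    (zeroInsert_mem_Ico (n := n) (m := m) hβ (iterate_betaT_mem_Ico β hy n))
  rwa [betaTrunc_betaTrunc_of_le hβ₀ hy (by lia), ← zeroInsert_eq hβ hy] at h

theorem iterate_betaT_zeroInsert (hβ : 1 ≤ β) (hy : y ∈ Ico (0 : ℝ) 1) (i : ℕ) :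
    (betaT β)^[(n + m) * i] (zeroInsert β n m y) = zeroInsert β n m ((betaT β)^[n * i] y) := by
  induction i with
  | zero => simp
  | succ i ih =>
    have hTy : (betaT β)^[n * i] y ∈ Ico (0 : ℝ) 1 := iterate_betaT_mem_Ico β hy (n * i)
    rw [Nat.mul_succ, add_comm _ (n + m), Function.iterate_add_apply _ (n + m), ih, Nat.mul_succ,
      add_comm (n * i), Function.iterate_add_apply _ n (n * i)]
    exact (betaWord_zeroInsert_and_iterate_betaT hfull hβ hTy).2

theorem zeroInsert_mem_Vnm (hβ : 1 ≤ β) (hy : y ∈ Ico (0 : ℝ) 1) :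
    zeroInsert β n m y ∈ Vnm β n m := by
  have hβ₀ : 0 < β := zero_lt_one.trans_le hβ
  refine ⟨zeroInsert_mem_Ico hβ hy, fun i => ?_⟩
  have hTy : (betaT β)^[n * i] y ∈ Ico (0 : ℝ) 1 := iterate_betaT_mem_Ico β hy _
  have hblock := betaWord_eq_iff.1 (betaWord_zeroInsert_and_iterate_betaT hfull hβ hTy).1
  simp only [betaDigit_add, iterate_betaT_zeroInsert hfull hβ hy]
  constructor
  · exact isAdmissibleWord_betaWord (zeroInsert_mem_Ico hβ hTy) n
  · intro j hnj hj
    rw [hblock j hj, betaDigit_betaTrunc_of_le hβ₀ hTy hnj]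

theorem zeroInsertPartial_add_pow_le_one (hβ : 0 < β) (hy : y ∈ Ico (0 : ℝ) 1) (k : ℕ) :
    zeroInsertPartial β n m k y + (β⁻¹ ^ (n + m)) ^ k ≤ 1 := by
  induction k generalizing y with
  | zero => simp [zeroInsertPartial]
  | succ k ih =>
    have hone := (hfull y hy).betaTrunc_add_pow_le_one hβ (betaTrunc_mem_Ico hβ hy n)
    rw [betaTrunc_betaTrunc_of_le hβ hy (by lia)] at hone
    calc zeroInsertPartial β n m (k + 1) y + (β⁻¹ ^ (n + m)) ^ (k + 1)
        = betaTrunc β y n + β⁻¹ ^ (n + m) *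
            (zeroInsertPartial β n m k ((betaT β)^[n] y) + (β⁻¹ ^ (n + m)) ^ k) := by
          rw [zeroInsertPartial_succ]; ring
      _ ≤ betaTrunc β y n + β⁻¹ ^ (n + m) := by
          have := mul_le_of_le_one_right (a := β⁻¹ ^ (n + m)) (by positivity)
            (ih (iterate_betaT_mem_Ico β hy n))
          gcongr
      _ ≤ 1 := hone

theorem betaTrunc_add_pow_le_betaTrunc_of_lt (hβ : 0 < β) (hy : y ∈ Ico (0 : ℝ) 1)
    (hz : z ∈ Ico (0 : ℝ) 1) (hlt : betaTrunc β y n < betaTrunc β z n) :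
    betaTrunc β y n + β⁻¹ ^ (n + m) ≤ betaTrunc β z n := by
  have hgap := (hfull y hy).betaTrunc_add_pow_le_betaTrunc hβ (betaTrunc_mem_Ico hβ hz n)
  rw [betaTrunc_betaTrunc_of_le hβ hy (by lia), betaTrunc_betaTrunc_of_le hβ hz (by lia)] at hgap
  exact hgap hlt

theorem zeroInsertPartial_add_pow_le (hβ : 0 < β) (hy : y ∈ Ico (0 : ℝ) 1)
    (hz : z ∈ Ico (0 : ℝ) 1) {k : ℕ} (hyz : (β⁻¹ ^ n) ^ k ≤ z - y) :
    zeroInsertPartial β n m k y + (β⁻¹ ^ (n + m)) ^ k ≤ zeroInsertPartial β n m k z := by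
  induction k generalizing y z with
  | zero => linarith [pow_zero (β⁻¹ ^ n), hy.1, hz.2]
  | succ k ih =>
    have hTy : (betaT β)^[n] y ∈ Ico (0 : ℝ) 1 := iterate_betaT_mem_Ico β hy n
    have hTz : (betaT β)^[n] z ∈ Ico (0 : ℝ) 1 := iterate_betaT_mem_Ico β hz n
    have hle : y ≤ z := sub_nonneg.1 (hyz.trans' (by positivity))
    have hpow : 0 < β⁻¹ ^ (n + m) := by positivity
    rw [zeroInsertPartial_succ, zeroInsertPartial_succ, pow_succ', add_assoc, ← mul_add]
    rcases (betaTrunc_mono hβ hy hz hle n).eq_or_lt with heq | hlt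
    · have hsub : z - y = β⁻¹ ^ n * ((betaT β)^[n] z - (betaT β)^[n] y) := by
        linarith [betaTrunc_add_pow_mul_iterate hβ.ne' y n,
          betaTrunc_add_pow_mul_iterate hβ.ne' z n]
      rw [hsub, pow_succ'] at hyz
      rw [heq]
      gcongr
      exact ih hTy hTz (le_of_mul_le_mul_left hyz (by positivity))
    · calc betaTrunc β y n + β⁻¹ ^ (n + m) *
            (zeroInsertPartial β n m k ((betaT β)^[n] y) + (β⁻¹ ^ (n + m)) ^ k)
          ≤ betaTrunc β y n + β⁻¹ ^ (n + m) := by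
            have := mul_le_of_le_one_right hpow.le (zeroInsertPartial_add_pow_le_one hfull hβ hTy k)
            gcongr
        _ ≤ betaTrunc β z n := betaTrunc_add_pow_le_betaTrunc_of_lt hfull hβ hy hz hlt
        _ ≤ betaTrunc β z n +
              β⁻¹ ^ (n + m) * zeroInsertPartial β n m k ((betaT β)^[n] z) :=
            le_add_of_nonneg_right (mul_nonneg hpow.le (zeroInsertPartial_nonneg hβ.le hTz k))

theorem pow_le_zeroInsert_sub (hβ : 1 ≤ β) (hy : y ∈ Ico (0 : ℝ) 1) (hz : z ∈ Ico (0 : ℝ) 1)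
    {k : ℕ} (hyz : 2 * (β⁻¹ ^ n) ^ k ≤ z - y) :
    (β⁻¹ ^ (n + m)) ^ k ≤ zeroInsert β n m z - zeroInsert β n m y := by
  have hβ₀ : 0 < β := zero_lt_one.trans_le hβ
  have hmid : (y + z) / 2 ∈ Ico (0 : ℝ) 1 := by
    constructor <;> linarith [hy.1, hy.2, hz.1, hz.2]
  have hleft := zeroInsertPartial_add_pow_le hfull hβ₀ hy hmid (k := k) (by linarith)
  have hright := zeroInsertPartial_add_pow_le hfull hβ₀ hmid hz (k := k) (by linarith)
  linarith [zeroInsert_le_zeroInsertPartial_add_pow (n := n) (m := m) hβ hy k,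
    zeroInsertPartial_le_zeroInsert (n := n) (m := m) hβ hz k]

theorem sub_le_mul_zeroInsert_sub_rpow (hβ : 1 < β) (hn : 0 < n) (hy : y ∈ Ico (0 : ℝ) 1)
    (hz : z ∈ Ico (0 : ℝ) 1) (hyz : y < z) : z - y ≤
      2 * β ^ n * (zeroInsert β n m z - zeroInsert β n m y) ^ ((n : ℝ) / (n + m)) := by
  have hβ₀ : 0 < β⁻¹ := inv_pos.2 (zero_lt_one.trans hβ)
  have hexp : (β⁻¹ ^ (n + m)) ^ ((n : ℝ) / (n + m)) = β⁻¹ ^ n := by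
    rw [← Real.rpow_natCast_mul hβ₀.le, Nat.cast_add, mul_div_cancel₀ _ (by positivity),
      Real.rpow_natCast]
  simpa using le_mul_rpow_of_forall_pow_le (pow_pos hβ₀ n)
    (pow_lt_one₀ hβ₀.le (inv_lt_one_of_one_lt₀ hβ) hn.ne') (by positivity) (by positivity) hexp
    (sub_pos.2 hyz) (by linarith [hy.1, hz.2])
    fun k => pow_le_zeroInsert_sub hfull hβ.le hy hz

theorem abs_sub_le_mul_abs_zeroInsert_sub_rpow (hβ : 1 < β) (hn : 0 < n)
    (hy : y ∈ Ico (0 : ℝ) 1) (hz : z ∈ Ico (0 : ℝ) 1) : |y - z| ≤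
      2 * β ^ n * |zeroInsert β n m y - zeroInsert β n m z| ^ ((n : ℝ) / (n + m)) := by
  wlog hyz : y ≤ z generalizing y z
  · rw [abs_sub_comm, abs_sub_comm (zeroInsert β n m y)]
    exact this hz hy (le_of_not_ge hyz)
  rcases hyz.eq_or_lt with rfl | hlt
  · rw [sub_self, abs_zero]
    positivity
  rw [abs_sub_comm, abs_of_pos (sub_pos.2 hlt), abs_sub_comm (zeroInsert β n m y)]
  refine (sub_le_mul_zeroInsert_sub_rpow hfull hβ hn hy hz hlt).trans ?_
  have hbase := (le_abs_self _).trans (Real.abs_rpow_le_abs_rpow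
    (zeroInsert β n m z - zeroInsert β n m y) ((n : ℝ) / (n + m)))
  gcongr

theorem edist_le_mul_edist_zeroInsert_rpow (hβ : 1 < β) (hn : 0 < n)
    (hy : y ∈ Ico (0 : ℝ) 1) (hz : z ∈ Ico (0 : ℝ) 1) : edist y z ≤
      ENNReal.ofReal (2 * β ^ n) *
        edist (zeroInsert β n m y) (zeroInsert β n m z) ^ ((n : ℝ) / (n + m)) := by
  rw [edist_dist, edist_dist, ENNReal.ofReal_rpow_of_nonneg dist_nonneg (by positivity),
    ← ENNReal.ofReal_mul (by positivity)]
  exact ENNReal.ofReal_le_ofReal (abs_sub_le_mul_abs_zeroInsert_sub_rpow hfull hβ hn hy hz)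

end Full

end ZeroInsert

/-- dim_H V_{n,m}^β ≥ n/(n+m). -/
theorem dimH_Vnm_ge (β : ℝ) (hβ : β ∈ A0) (M : ℕ) (hMpos : 0 < M)
    (hM : ∀ w : List ℤ, IsAdmissibleWord β w → ∀ η : List ℤ, IsAdmissibleWord β η →
      IsAdmissibleWord β (w ++ List.replicate M 0 ++ η))
    (n m : ℕ) (hn : 1 ≤ n) (hm : M ≤ m) :
    ENNReal.ofReal ((n : ℝ) / (n + m)) ≤ dimH (Vnm β n m) := by
  have hβ₁ : 1 < β := hβ.1
  have hfull : ∀ y ∈ Ico (0 : ℝ) 1, HasFullCylinder β (betaTrunc β y n) (n + m) :=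
    fun y hy => hasFullCylinder_betaTrunc hβ₁ hM hm n hy
  have hs : 0 < (n : ℝ) / (n + m) := by positivity
  have hIco : dimH (Ico (0 : ℝ) 1) = 1 := by
    simpa using Real.dimH_of_nonempty_interior (s := Ico (0 : ℝ) 1) (by simp)
  calc ENNReal.ofReal ((n : ℝ) / (n + m))
      = ((n : ℝ) / (n + m)).toNNReal * dimH (Ico (0 : ℝ) 1) := by
        rw [hIco, mul_one, ENNReal.ofReal]
    _ ≤ dimH (zeroInsert β n m '' Ico 0 1) :=
        mul_dimH_le_dimH_image (Real.toNNReal_pos.2 hs) fun y hy z hz => by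
          rw [Real.coe_toNNReal _ hs.le]
          exact edist_le_mul_edist_zeroInsert_rpow hfull hβ₁ hn hy hz
    _ ≤ dimH (Vnm β n m) :=
        dimH_mono (image_subset_iff.2 fun y hy => zeroInsert_mem_Vnm hfull hβ₁.le hy)
end

section
/- Let β > 1. For any extended real numbers 0 ≤ a ≤ b ≤ ∞, the set E_β(a,b) = {(x,y) ∈ [0,1)² : liminf_n (log W_n^β(x,y))/n = a and limsup_n (log W_n^β(x,y))/n = b} has Hausdorff dimension 2. -/
open Filter MeasureTheory Set

/-!
The upper bound is the dimension of the plane. For the lower bound, fix `τ < 1` and take `N` so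
large that at least `M ≥ β ^ (N τ)` nonzero words of length `N` have a full cylinder. Full words and
the zero word can be concatenated freely, so these letters code points of `[0, 1)`. Let `y` be coded
by a sequence `v` of nonzero letters preceded by a marker of two zero letters, and `x` by a sequence
of free nonzero letters into which, at sparse positions `P k`, one inserts the prefix of length
`L k` of the code of `y` followed by a letter that spoils its continuation. Since the marker occurs
in `x` only at the insertions, `W_n(x, y)` equals `N * P (k + 1)` for `n` from about `N * L k` to
`N * L (k + 1)`. Hence the indicators are the limits of `log (N P k) / (N L k)` and
`log (N P (k + 1)) / (N L k)`, and `L` and `P` can be chosen to make these `a` and `b`, also when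
they are `0` or `∞`.

The insertions have density zero, so `x` and `y` determine their free letters and `v` with little
loss of precision: reading these as digits in base `M` is a `τ ^ 2`-Hölder map from the pairs
`(x, y)` onto the unit square. So the set has dimension at least `2 τ ^ 2` for all `τ < 1`.
-/

namespace BetaExpansion

open scoped Topology

section Orbits

variable {β x y : ℝ}

lemma betaT_mem_Ico (β x : ℝ) : betaT β x ∈ Ico (0 : ℝ) 1 :=
  ⟨Int.fract_nonneg _, Int.fract_lt_one _⟩

lemma iterate_betaT_mem_Ico (hx : x ∈ Ico (0 : ℝ) 1) (i : ℕ) :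
    (betaT β)^[i] x ∈ Ico (0 : ℝ) 1 := by
  cases i with
  | zero => exact hx
  | succ i => rw [Function.iterate_succ_apply']; exact betaT_mem_Ico _ _

lemma iterate_betaT_one_le_one (β : ℝ) (i : ℕ) : (betaT β)^[i] 1 ≤ 1 := by
  cases i with
  | zero => exact le_rfl
  | succ i => rw [Function.iterate_succ_apply']; exact (betaT_mem_Ico _ _).2.le

lemma betaDigit_iterate (β x : ℝ) (m i : ℕ) :
    betaDigit β ((betaT β)^[m] x) i = betaDigit β x (m + i) := by
  rw [betaDigit, betaDigit, ← Function.iterate_add_apply, add_comm]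

lemma betaDigit_zero_left (β : ℝ) (i : ℕ) : betaDigit β 0 i = 0 := by
  have h : (betaT β)^[i] 0 = 0 := Function.iterate_fixed (by simp [betaT]) i
  simp [betaDigit, h]

lemma mul_iterate_betaT (β x : ℝ) (i : ℕ) :
    β * (betaT β)^[i] x = betaDigit β x i + (betaT β)^[i + 1] x := by
  rw [Function.iterate_succ_apply']
  simp only [betaDigit, betaT]
  ring

lemma iterate_betaT_sub_iterate_betaT {n : ℕ} (h : ∀ i < n, betaDigit β x i = betaDigit β y i) :
    (betaT β)^[n] x - (betaT β)^[n] y = β ^ n * (x - y) := by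
  induction n with
  | zero => simp
  | succ n ih =>
    have hx := mul_iterate_betaT β x n
    have hy := mul_iterate_betaT β y n
    rw [h n n.lt_succ_self] at hx
    linear_combination β * ih (fun i hi => h i (hi.trans n.lt_succ_self)) - hx + hy

lemma floor_mul_add_div (hβ : 0 < β) (d : ℤ) (hy : y ∈ Ico (0 : ℝ) 1) :
    ⌊β * ((d + y) / β)⌋ = d := by
  rw [mul_div_cancel₀ _ hβ.ne', Int.floor_intCast_add, Int.floor_eq_zero_iff.2 hy, add_zero]

lemma betaT_add_div (hβ : 0 < β) (d : ℤ) (hy : y ∈ Ico (0 : ℝ) 1) :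
    betaT β ((d + y) / β) = y := by
  rw [betaT, floor_mul_add_div hβ d hy, mul_div_cancel₀ _ hβ.ne', add_sub_cancel_left]

lemma floor_add_betaT_div (hβ : 0 < β) (x : ℝ) : (⌊β * x⌋ + betaT β x) / β = x := by
  rw [betaT, add_sub_cancel, mul_div_cancel_left₀ _ hβ.ne']

end Orbits

section FullCylinders

variable {β c c' x : ℝ} {m n : ℕ}

/-- `c` is the left endpoint of a full cylinder of order `n`. Fullness is recorded through the
inverse branch `t ↦ c + t / β ^ n` of `betaT β ^[n]` being defined on all of `[0, 1)`, rather than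
through the length of the cylinder as in `IsFull`. -/
structure IsFullEndpoint (β : ℝ) (n : ℕ) (c : ℝ) : Prop where
  nonneg : 0 ≤ c
  branch_lt_one : ∀ t ∈ Ico (0 : ℝ) 1, c + t / β ^ n < 1
  iterate_branch : ∀ t ∈ Ico (0 : ℝ) 1, (betaT β)^[n] (c + t / β ^ n) = t
  digit_branch : ∀ t ∈ Ico (0 : ℝ) 1, ∀ i < n, betaDigit β (c + t / β ^ n) i = betaDigit β c i

namespace IsFullEndpoint

lemma lt_one (h : IsFullEndpoint β n c) : c < 1 := by
  simpa using h.branch_lt_one 0 (by simp)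

lemma mem_Ico (h : IsFullEndpoint β n c) : c ∈ Ico (0 : ℝ) 1 :=
  ⟨h.nonneg, h.lt_one⟩

lemma branch_mem_Ico (hβ : 0 < β) (h : IsFullEndpoint β n c) {t : ℝ} (ht : t ∈ Ico (0 : ℝ) 1) :
    c + t / β ^ n ∈ Ico (0 : ℝ) 1 :=
  ⟨add_nonneg h.nonneg (div_nonneg ht.1 (by positivity)), h.branch_lt_one t ht⟩

lemma iterate_eq_zero (h : IsFullEndpoint β n c) : (betaT β)^[n] c = 0 := by
  simpa using h.iterate_branch 0 (by simp)

lemma order_zero (β : ℝ) : IsFullEndpoint β 0 0 where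
  nonneg := le_rfl
  branch_lt_one t ht := by simpa using ht.2
  iterate_branch t _ := by simp
  digit_branch := by simp

lemma cons (hβ : 0 < β) {d : ℤ} (hd : 0 ≤ d) (h : IsFullEndpoint β n c)
    (hlt : ∀ t ∈ Ico (0 : ℝ) 1, d + (c + t / β ^ n) < β) :
    IsFullEndpoint β (n + 1) ((d + c) / β) := by
  have hbranch (t : ℝ) : (d + c) / β + t / β ^ (n + 1) = (d + (c + t / β ^ n)) / β := by
    rw [pow_succ]; field_simp; ring
  have hd' : (0 : ℝ) ≤ d := by exact_mod_cast hd
  refine ⟨div_nonneg (add_nonneg hd' h.nonneg) hβ.le, fun t ht => ?_, fun t ht => ?_,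
    fun t ht i hi => ?_⟩ <;> rw [hbranch]
  · exact (div_lt_one hβ).2 (hlt t ht)
  · rw [Function.iterate_succ_apply, betaT_add_div hβ d (h.branch_mem_Ico hβ ht),
      h.iterate_branch t ht]
  · cases i with
    | zero =>
      exact (floor_mul_add_div hβ d (h.branch_mem_Ico hβ ht)).trans
        (floor_mul_add_div hβ d h.mem_Ico).symm
    | succ i =>
      rw [add_comm i 1, ← betaDigit_iterate, ← betaDigit_iterate, Function.iterate_one,
        betaT_add_div hβ d (h.branch_mem_Ico hβ ht), betaT_add_div hβ d h.mem_Ico]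
      exact h.digit_branch t ht i (by omega)

lemma append (hβ : 0 < β) (h : IsFullEndpoint β n c) (h' : IsFullEndpoint β m c') :
    IsFullEndpoint β (n + m) (c + c' / β ^ n) := by
  have hbranch (t : ℝ) : c + c' / β ^ n + t / β ^ (n + m) = c + (c' + t / β ^ m) / β ^ n := by
    rw [pow_add]; field_simp; ring
  refine ⟨(h.branch_mem_Ico hβ h'.mem_Ico).1, fun t ht => ?_, fun t ht => ?_,
    fun t ht i hi => ?_⟩ <;> rw [hbranch]
  all_goals have ht' := h'.branch_mem_Ico hβ ht
  · exact h.branch_lt_one _ ht'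
  · rw [add_comm n m, Function.iterate_add_apply, h.iterate_branch _ ht', h'.iterate_branch t ht]
  · rcases lt_or_ge i n with hin | hin
    · rw [h.digit_branch _ ht' i hin, h.digit_branch _ h'.mem_Ico i hin]
    · obtain ⟨j, rfl⟩ := Nat.exists_eq_add_of_le hin
      rw [← betaDigit_iterate, ← betaDigit_iterate, h.iterate_branch _ ht',
        h.iterate_branch _ h'.mem_Ico]
      exact h'.digit_branch t ht j (by omega)

lemma zero (hβ : 1 ≤ β) (n : ℕ) : IsFullEndpoint β n 0 := by
  have hβ0 : 0 < β := by linarith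
  induction n with
  | zero => exact order_zero β
  | succ n ih =>
    simpa using ih.cons hβ0 (d := 0) le_rfl fun t ht => by
      simpa using (ih.branch_lt_one t ht).trans_le hβ

lemma mono (hβ : 1 ≤ β) (hnm : n ≤ m) (h : IsFullEndpoint β n c) : IsFullEndpoint β m c := by
  obtain ⟨k, rfl⟩ := Nat.exists_eq_add_of_le hnm
  simpa using h.append (by linarith) (zero hβ k)

lemma add_le_one (hβ : 0 < β) (h : IsFullEndpoint β n c) : c + 1 / β ^ n ≤ 1 := by
  by_contra! hc
  have hp : 0 < β ^ n := by positivity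
  have ht : β ^ n * (1 - c) ∈ Ico (0 : ℝ) 1 := by
    refine ⟨mul_nonneg hp.le (by linarith [h.lt_one]), ?_⟩
    rw [← lt_div_iff₀' hp]
    linarith
  have := h.branch_lt_one _ ht
  rw [mul_div_cancel_left₀ _ hp.ne'] at this
  linarith

lemma add_le_of_lt (hβ : 0 < β) (h : IsFullEndpoint β n c) (h' : IsFullEndpoint β n c')
    (hlt : c < c') : c + 1 / β ^ n ≤ c' := by
  by_contra! hc
  have hp : 0 < β ^ n := by positivity
  have hpos : 0 < β ^ n * (c' - c) := mul_pos hp (by linarith)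
  have ht : β ^ n * (c' - c) ∈ Ico (0 : ℝ) 1 := by
    refine ⟨hpos.le, ?_⟩
    rw [← lt_div_iff₀' hp]
    linarith
  have := h.iterate_branch _ ht
  rw [mul_div_cancel_left₀ _ hp.ne', add_sub_cancel, h'.iterate_eq_zero] at this
  exact hpos.ne this

lemma eq_of_digit_eq (hβ : 0 < β) (h : IsFullEndpoint β n c) (h' : IsFullEndpoint β n c')
    (hd : ∀ j < n, betaDigit β c j = betaDigit β c' j) : c = c' := by
  have hsub := iterate_betaT_sub_iterate_betaT hd
  rw [h.iterate_eq_zero, h'.iterate_eq_zero, sub_self] at hsub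
  exact sub_eq_zero.1 ((mul_eq_zero.1 hsub.symm).resolve_left (by positivity))

end IsFullEndpoint

-- The extra conclusion, that the whole cylinder lies to the left of `w`, is what makes the
-- induction work: it bounds the branch after the common first digit is put back in front.
lemma exists_isFullEndpoint_of_digit_lt (hβ : 0 < β) {s w : ℝ} (hs : s ∈ Ico (0 : ℝ) 1)
    (hw : w ≤ 1) (hd : ∀ i < m, betaDigit β s i = betaDigit β w i)
    (hm : betaDigit β s m < betaDigit β w m) :
    ∃ c, IsFullEndpoint β (m + 1) c ∧ s = c + (betaT β)^[m + 1] s / β ^ (m + 1) ∧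
      ∀ t ∈ Ico (0 : ℝ) 1, c + t / β ^ (m + 1) < w := by
  induction m generalizing s w with
  | zero =>
    have hfloor : 0 ≤ ⌊β * s⌋ := Int.floor_nonneg.2 (mul_nonneg hβ.le hs.1)
    have hlt : ∀ t ∈ Ico (0 : ℝ) 1, ⌊β * s⌋ + t < β * w := fun t ht => by
      have h1 : (⌊β * s⌋ : ℝ) + 1 ≤ ⌊β * w⌋ := by exact_mod_cast hm
      linarith [ht.2, Int.floor_le (β * w)]
    refine ⟨_, (IsFullEndpoint.order_zero β).cons hβ hfloor fun t ht => ?_, ?_, fun t ht => ?_⟩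
    · simpa using (hlt t ht).trans_le (mul_le_of_le_one_right hβ.le hw)
    · simpa [← add_div] using (floor_add_betaT_div hβ s).symm
    · simpa [← add_div, div_lt_iff₀' hβ] using hlt t ht
  | succ m ih =>
    have hfloor : 0 ≤ ⌊β * s⌋ := Int.floor_nonneg.2 (mul_nonneg hβ.le hs.1)
    obtain ⟨c, hc, hsc, hlt⟩ := ih (betaT_mem_Ico β s) (betaT_mem_Ico β w).2.le
      (fun i hi => hd (i + 1) (by omega)) hm
    have hlt' : ∀ t ∈ Ico (0 : ℝ) 1, ⌊β * s⌋ + (c + t / β ^ (m + 1)) < β * w := fun t ht => by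
      have h1 : ⌊β * s⌋ = ⌊β * w⌋ := hd 0 m.succ_pos
      have h2 : betaT β w = β * w - ⌊β * w⌋ := rfl
      rw [h1]
      linarith [hlt t ht]
    have hbranch (t : ℝ) :
        (⌊β * s⌋ + c) / β + t / β ^ (m + 1 + 1) = (⌊β * s⌋ + (c + t / β ^ (m + 1))) / β := by
      rw [pow_succ β (m + 1)]; field_simp; ring
    refine ⟨_, hc.cons hβ hfloor fun t ht => ?_, ?_, fun t ht => ?_⟩
    · exact (hlt' t ht).trans_le (mul_le_of_le_one_right hβ.le hw)
    · rw [hbranch, Function.iterate_succ_apply, ← hsc]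
      exact (floor_add_betaT_div hβ s).symm
    · rw [hbranch, div_lt_iff₀' hβ]
      exact hlt' t ht

lemma exists_isFullEndpoint_prefix (hβ : 0 < β) (hx : x ∈ Ico (0 : ℝ) 1) (n : ℕ) :
    ∃ j m, j + m = n ∧ ∃ c, IsFullEndpoint β j c ∧ ∃ s ∈ Ico (0 : ℝ) 1, x = c + s / β ^ j ∧
      ∀ i < m, betaDigit β s i = betaDigit β 1 i := by
  induction n with
  | zero => exact ⟨0, 0, rfl, 0, .order_zero β, x, hx, by simp, by simp⟩
  | succ n ih =>
    obtain ⟨j, m, hjm, c, hc, s, hs, hxs, hd⟩ := ih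
    have horbit : (betaT β)^[m] s ≤ (betaT β)^[m] 1 := by
      have := iterate_betaT_sub_iterate_betaT hd
      nlinarith [hs.2, pow_pos hβ m]
    have hle : betaDigit β s m ≤ betaDigit β 1 m :=
      Int.floor_le_floor (mul_le_mul_of_nonneg_left horbit hβ.le)
    rcases hle.lt_or_eq with hlt | heq
    · obtain ⟨c', hc', hs', -⟩ := exists_isFullEndpoint_of_digit_lt hβ hs le_rfl hd hlt
      refine ⟨j + (m + 1), 0, by omega, _, hc.append hβ hc', (betaT β)^[m + 1] s,
        iterate_betaT_mem_Ico hs (m + 1), ?_, by simp⟩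
      rw [add_assoc, pow_add, mul_comm (β ^ j), ← div_div, ← add_div, ← hs', hxs]
    · refine ⟨j, m + 1, by omega, c, hc, s, hs, hxs, fun i hi => ?_⟩
      rcases (Nat.lt_succ_iff_lt_or_eq).1 hi with hi | rfl
      exacts [hd i hi, heq]

lemma exists_isFullEndpoint_mem_Icc (hβ : 0 < β) (hx : x ∈ Ico (0 : ℝ) 1) (n : ℕ) :
    ∃ j ≤ n, ∃ c, IsFullEndpoint β j c ∧
      x ∈ Icc (c + 1 / β ^ j - 1 / β ^ n) (c + 1 / β ^ j) := by
  obtain ⟨j, m, rfl, c, hc, s, hs, rfl, hd⟩ := exists_isFullEndpoint_prefix hβ hx n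
  have hgap : 1 - s ≤ 1 / β ^ m := by
    rw [le_div_iff₀' (pow_pos hβ m)]
    linarith [iterate_betaT_sub_iterate_betaT hd, iterate_betaT_one_le_one β m,
      (iterate_betaT_mem_Ico (β := β) hs m).1]
  have hgap' : (1 - s) / β ^ j ≤ 1 / β ^ (j + m) := by
    rw [pow_add, mul_comm, ← div_div]
    gcongr
  have hs1 : s / β ^ j ≤ 1 / β ^ j := by
    gcongr
    exact hs.2.le
  rw [sub_div] at hgap'
  exact ⟨j, by omega, c, hc, by linarith, by linarith⟩

lemma finite_setOf_isFullEndpoint (hβ : 0 < β) (n : ℕ) : {c | IsFullEndpoint β n c}.Finite := by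
  have hp : 0 < β ^ n := by positivity
  refine Set.Finite.of_finite_image (f := fun c => ⌊β ^ n * c⌋)
    ((Set.finite_Icc (0 : ℤ) ⌊β ^ n⌋).subset ?_) fun c hc c' hc' hfloor => ?_
  · rintro _ ⟨c, hc, rfl⟩
    exact ⟨Int.floor_nonneg.2 (mul_nonneg hp.le hc.nonneg),
      Int.floor_le_floor (mul_le_of_le_one_right hp.le hc.lt_one.le)⟩
  · have hclose := Int.abs_sub_lt_one_of_floor_eq_floor hfloor
    rw [← mul_sub, abs_mul, abs_of_pos hp, ← lt_div_iff₀' hp, abs_lt] at hclose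
    rcases lt_trichotomy c c' with h | h | h
    · linarith [hc.add_le_of_lt hβ hc' h]
    · exact h
    · linarith [hc'.add_le_of_lt hβ hc h]

-- Every point is within `1 / β ^ n` of the right end of a full cylinder of order at most `n`, and
-- such cylinders share their left endpoints with full cylinders of order exactly `n`.
lemma pow_le_mul_ncard_setOf_isFullEndpoint (hβ : 1 ≤ β) (n : ℕ) :
    β ^ n ≤ (n + 1) * ({c | IsFullEndpoint β n c}.ncard : ℝ) := by
  have hβ0 : 0 < β := by linarith
  have hfin := finite_setOf_isFullEndpoint hβ0 n
  rw [Set.ncard_eq_toFinset_card _ hfin]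
  set S := hfin.toFinset
  have hcover : Ico (0 : ℝ) 1 ⊆ ⋃ p ∈ Finset.range (n + 1) ×ˢ S,
      Icc (p.2 + 1 / β ^ p.1 - 1 / β ^ n) (p.2 + 1 / β ^ p.1) := fun x hx => by
    obtain ⟨j, hj, c, hc, hxc⟩ := exists_isFullEndpoint_mem_Icc hβ0 hx n
    refine mem_biUnion (x := (j, c)) ?_ hxc
    simpa [S, Nat.lt_succ_iff] using ⟨hj, hc.mono hβ hj⟩
  have hvol : (1 : ENNReal) ≤ ∑ p ∈ Finset.range (n + 1) ×ˢ S, ENNReal.ofReal (1 / β ^ n) := by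
    simpa using (measure_mono (μ := volume) hcover).trans (measure_biUnion_finset_le _ _)
  rw [Finset.sum_const, Finset.card_product, Finset.card_range, nsmul_eq_mul,
    ← ENNReal.ofReal_natCast, ← ENNReal.ofReal_mul (by positivity), ENNReal.one_le_ofReal,
    mul_one_div, one_le_div (by positivity)] at hvol
  exact_mod_cast hvol

end FullCylinders

section Codes

variable {β c c' : ℝ} {N : ℕ}

/-- A full endpoint of order `N` whose cylinder is separated from `1` by a further cylinder
length; these are the letters from which points are assembled. The gap keeps concatenations of
letters away from `1`, hence different concatenations away from each other. -/
structure IsLetter (β : ℝ) (N : ℕ) (c : ℝ) : Prop extends IsFullEndpoint β N c where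
  add_two_div_le_one : c + 2 / β ^ N ≤ 1

lemma IsLetter.zero (hβ : 1 ≤ β) (h : IsLetter β N c) : IsLetter β N 0 where
  toIsFullEndpoint := .zero hβ N
  add_two_div_le_one := by linarith [h.nonneg, h.add_two_div_le_one]

lemma ncard_setOf_isFullEndpoint_le (hβ : 1 ≤ β) (N : ℕ) :
    {c | IsFullEndpoint β N c}.ncard ≤ {c | IsLetter β N c}.ncard + 1 := by
  have hβ0 : 0 < β := by linarith
  have hfin := finite_setOf_isFullEndpoint hβ0 N
  obtain ⟨d, hd, hmax⟩ := exists_max_image _ id hfin ⟨0, .zero hβ N⟩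
  refine (ncard_le_ncard (fun c hc => ?_) (.insert d (hfin.subset fun c hc => hc.1))).trans
    (ncard_insert_le d _)
  rcases (hmax c hc).lt_or_eq with h | h
  · refine .inr ⟨hc, ?_⟩
    have h1 := hd.add_le_one hβ0
    have h2 := hc.add_le_of_lt hβ0 hd h
    have h3 : 2 / β ^ N = 1 / β ^ N + 1 / β ^ N := by ring
    linarith
  · exact .inl h

lemma eventually_mul_pow_add_lt_pow {r : ℝ} (hr : 0 ≤ r) (hβ : 1 < β) (hrβ : r < β) (C : ℝ) :
    ∀ᶠ n : ℕ in atTop, (n + 1) * (r ^ n + C) < β ^ n := by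
  have hβ0 : |r| < β := by rwa [abs_of_nonneg hr]
  have h1 := isLittleO_pow_const_mul_const_pow_const_pow_of_norm_lt (R := ℝ) 1 hβ0
  have h2 := isLittleO_pow_const_mul_const_pow_const_pow_of_norm_lt (R := ℝ) 0 hβ0
  have h3 := isLittleO_pow_const_mul_const_pow_const_pow_of_norm_lt (R := ℝ) (r₁ := 1) 1
    (by simpa using hβ)
  have h4 := isLittleO_pow_const_mul_const_pow_const_pow_of_norm_lt (R := ℝ) (r₁ := 1) 0
    (by simpa using hβ)
  have hsum := (h1.add h2).add ((h3.const_mul_left C).add (h4.const_mul_left C))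
  filter_upwards [hsum.bound one_half_pos] with n hn
  have hp : 0 < β ^ n := by positivity
  rw [Real.norm_of_nonneg hp.le] at hn
  have := (Real.le_norm_self _).trans hn
  simp only [pow_one, pow_zero, one_mul, one_pow, mul_one] at this
  linarith

lemma exists_injective_isLetter (hβ : 1 < β) {τ : ℝ} (hτ : τ < 1) :
    ∃ N M : ℕ, 0 < N ∧ 2 ≤ M ∧ (β ^ N) ^ τ ≤ M ∧ ∃ e : Option (Fin M) → ℝ,
      Function.Injective e ∧ e none = 0 ∧ ∀ a, IsLetter β N (e a) := by
  have hβ0 : 0 < β := by linarith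
  obtain ⟨N, hN, hN0⟩ := ((eventually_mul_pow_add_lt_pow (Real.rpow_nonneg hβ0.le τ) hβ
    (Real.rpow_lt_self_of_one_lt hβ hτ) 4).and (eventually_gt_atTop 0)).exists
  set A := {c | IsLetter β N c} \ {0}
  set M := Nat.card A
  have hcard : {c | IsFullEndpoint β N c}.ncard ≤ M + 2 := by
    have h1 := ncard_setOf_isFullEndpoint_le hβ.le N
    have h2 : _ ≤ M := pred_ncard_le_ncard_sdiff_singleton {c | IsLetter β N c} 0
    omega
  have hM : (β ^ τ) ^ N + 4 < M + 2 := by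
    have h1 : (({c | IsFullEndpoint β N c}.ncard : ℕ) : ℝ) ≤ M + 2 := by exact_mod_cast hcard
    have h2 := hN.trans_le (pow_le_mul_ncard_setOf_isFullEndpoint hβ.le N)
    exact (lt_of_mul_lt_mul_left h2 (by positivity)).trans_le h1
  have hM2 : 2 < M := by
    have : (2 : ℝ) < M := by linarith [pow_nonneg (Real.rpow_nonneg hβ0.le τ) N]
    exact_mod_cast this
  have : Finite A := Nat.finite_of_card_ne_zero (by omega)
  let f : Fin M ≃ A := (Finite.equivFin A).symm
  refine ⟨N, M, hN0, hM2.le, ?_, fun a => a.elim 0 fun i => f i, ?_, rfl, ?_⟩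
  · rw [← Real.rpow_natCast, ← Real.rpow_mul hβ0.le, mul_comm, Real.rpow_mul hβ0.le,
      Real.rpow_natCast]
    linarith
  · exact Option.injective_iff.2 ⟨Subtype.val_injective.comp f.injective, by
      rintro ⟨i, hi⟩
      exact (f i).2.2 hi⟩
  · rintro (_ | i)
    exacts [(f ⟨0, by omega⟩).2.1.zero hβ.le, (f i).2.1]

/-- The point with base-`β ^ N` expansion `ω`. When the `ω i` are letters of order `N`, the
β-expansion of this point is the concatenation of their words of `N` digits. -/
noncomputable def code (β : ℝ) (N : ℕ) (ω : ℕ → ℝ) : ℝ :=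
  ∑' i, ω i / (β ^ N) ^ i

variable {ω ω' : ℕ → ℝ}

lemma IsLetter.one_div_pow_le_half (h : IsLetter β N c) : 1 / β ^ N ≤ 1 / 2 := by
  have := h.add_two_div_le_one
  rw [← mul_one_div] at this
  linarith [h.nonneg]

lemma summable_code (hβ : 0 < β) (hω : ∀ i, IsLetter β N (ω i)) :
    Summable fun i => ω i / (β ^ N) ^ i := by
  refine .of_nonneg_of_le (fun i => div_nonneg (hω i).nonneg (by positivity)) (fun i => ?_)
    (summable_geometric_of_lt_one (r := 1 / β ^ N) (by positivity)
      ((hω 0).one_div_pow_le_half.trans_lt one_half_lt_one))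
  rw [one_div_pow]
  gcongr
  exact (hω i).lt_one.le

lemma code_eq_add_div (hβ : 0 < β) (hω : ∀ i, IsLetter β N (ω i)) :
    code β N ω = ω 0 + code β N (fun i => ω (i + 1)) / β ^ N := by
  rw [code, (summable_code hβ hω).tsum_eq_zero_add, code, ← tsum_div_const]
  simp only [pow_zero, div_one, pow_succ, div_div]

lemma code_nonneg (hβ : 0 < β) (hω : ∀ i, IsLetter β N (ω i)) : 0 ≤ code β N ω :=
  tsum_nonneg fun i => div_nonneg (hω i).nonneg (by positivity)

lemma code_le (hβ : 0 < β) (hω : ∀ i, IsLetter β N (ω i)) : code β N ω ≤ 1 - 1 / β ^ N := by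
  set q := 1 / β ^ N with hq
  have hq0 : 0 ≤ q := by positivity
  have hq1 : q < 1 := (hω 0).one_div_pow_le_half.trans_lt one_half_lt_one
  have hle : ∀ i, ω i / (β ^ N) ^ i ≤ (1 - 2 * q) * q ^ i := fun i => by
    rw [hq, one_div_pow, mul_one_div, mul_one_div]
    gcongr
    linarith [(hω i).add_two_div_le_one]
  have hgeom := (hasSum_geometric_of_lt_one hq0 hq1).mul_left (1 - 2 * q)
  refine (hasSum_le hle (summable_code hβ hω).hasSum hgeom).trans ?_
  rw [← div_eq_mul_inv, div_le_iff₀ (by linarith)]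
  nlinarith

lemma code_mem_Ico (hβ : 0 < β) (hω : ∀ i, IsLetter β N (ω i)) :
    code β N ω ∈ Ico (0 : ℝ) 1 :=
  ⟨code_nonneg hβ hω, (code_le hβ hω).trans_lt (sub_lt_self 1 (by positivity))⟩

lemma iterate_betaT_code (hβ : 0 < β) (hω : ∀ i, IsLetter β N (ω i)) (i : ℕ) :
    (betaT β)^[N * i] (code β N ω) = code β N fun k => ω (k + i) := by
  induction i generalizing ω with
  | zero => simp
  | succ i ih =>
    have hω' : ∀ k, IsLetter β N (ω (k + 1)) := fun k => hω (k + 1)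
    rw [mul_add_one, Function.iterate_add_apply, code_eq_add_div hβ hω,
      (hω 0).iterate_branch _ (code_mem_Ico hβ hω'), ih hω']
    rfl

lemma betaDigit_code (hβ : 0 < β) (hω : ∀ i, IsLetter β N (ω i)) (i : ℕ) {j : ℕ} (hj : j < N) :
    betaDigit β (code β N ω) (N * i + j) = betaDigit β (ω i) j := by
  have hω' : ∀ k, IsLetter β N (ω (k + i)) := fun k => hω (k + i)
  rw [← betaDigit_iterate, iterate_betaT_code hβ hω, code_eq_add_div hβ hω', zero_add,
    (hω i).digit_branch _ (code_mem_Ico hβ fun k => hω (k + 1 + i)) j hj]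

lemma IsFullEndpoint.one_div_pow_le_abs_sub (hβ : 0 < β) (h : IsFullEndpoint β N c)
    (h' : IsFullEndpoint β N c') (hne : c ≠ c') : 1 / β ^ N ≤ |c - c'| := by
  rcases hne.lt_or_gt with hlt | hlt
  · rw [abs_sub_comm]
    exact (le_sub_iff_add_le'.2 (h.add_le_of_lt hβ h' hlt)).trans (le_abs_self _)
  · exact (le_sub_iff_add_le'.2 (h'.add_le_of_lt hβ h hlt)).trans (le_abs_self _)

lemma code_sub_code (hβ : 0 < β) (hω : ∀ i, IsLetter β N (ω i)) (hω' : ∀ i, IsLetter β N (ω' i)) :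
    code β N ω - code β N ω' = ω 0 - ω' 0 +
      (code β N (fun i => ω (i + 1)) - code β N fun i => ω' (i + 1)) / β ^ N := by
  rw [code_eq_add_div hβ hω, code_eq_add_div hβ hω']
  ring

lemma one_div_pow_le_abs_code_sub_code (hβ : 0 < β) (hω : ∀ i, IsLetter β N (ω i))
    (hω' : ∀ i, IsLetter β N (ω' i)) {i : ℕ} (heq : ∀ k < i, ω k = ω' k) (hne : ω i ≠ ω' i) :
    1 / (β ^ N) ^ (i + 2) ≤ |code β N ω - code β N ω'| := by
  have hB : 0 < β ^ N := by positivity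
  induction i generalizing ω ω' with
  | zero =>
    have htail : |code β N (fun k => ω (k + 1)) - code β N fun k => ω' (k + 1)| / β ^ N ≤
        (1 - 1 / β ^ N) / β ^ N := by
      gcongr
      have h1 := code_le hβ fun k => hω (k + 1)
      have h2 := code_le hβ fun k => hω' (k + 1)
      exact abs_sub_le_of_nonneg_of_le (code_nonneg hβ fun k => hω (k + 1)) h1
        (code_nonneg hβ fun k => hω' (k + 1)) h2
    rw [← abs_of_pos hB, ← abs_div, abs_of_pos hB] at htail
    have hhead := (hω 0).one_div_pow_le_abs_sub hβ (hω' 0).1 hne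
    have hsq : 1 / (β ^ N) ^ (0 + 2) = 1 / β ^ N - (1 - 1 / β ^ N) / β ^ N := by
      field_simp; ring
    rw [hsq, code_sub_code hβ hω hω']
    linarith [abs_sub_abs_le_abs_add (ω 0 - ω' 0)
      ((code β N (fun k => ω (k + 1)) - code β N fun k => ω' (k + 1)) / β ^ N)]
  | succ i ih =>
    rw [code_sub_code hβ hω hω', heq 0 (by omega), sub_self, zero_add, abs_div, abs_of_pos hB,
      add_right_comm, pow_succ, ← div_div]
    exact div_le_div_of_nonneg_right (ih (fun k => hω (k + 1)) (fun k => hω' (k + 1))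
      (fun k hk => heq (k + 1) (by omega)) hne) hB.le

end Codes

section Occurrences

variable {κ : Type*} {N : ℕ} {D : Option κ → ℕ → ℤ} {η ω : ℕ → Option κ} {X Y : ℕ → ℤ}

/-- The sequence `X` is the concatenation of the words `D (ω 0), D (ω 1), …`, each of length `N`.
The letter `none` stands for the word of zeros. -/
def HasBlocks (D : Option κ → ℕ → ℤ) (N : ℕ) (ω : ℕ → Option κ) (X : ℕ → ℤ) : Prop :=
  ∀ i, ∀ j < N, X (N * i + j) = D (ω i) j

lemma HasBlocks.eq_of_agree (hX : HasBlocks D N ω X) (hY : HasBlocks D N η Y) {p L : ℕ}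
    (h : ∀ l < L, ω (p + l) = η l) {i : ℕ} (hi : i < N * L) : X (N * p + i) = Y i := by
  have hN : 0 < N := Nat.pos_of_ne_zero fun h => by simp [h] at hi
  have hl : i / N < L := Nat.div_lt_of_lt_mul hi
  have h1 := hX (p + i / N) _ (Nat.mod_lt i hN)
  have h2 := hY (i / N) _ (Nat.mod_lt i hN)
  rw [mul_add, add_assoc, Nat.div_add_mod, h _ hl] at h1
  rw [Nat.div_add_mod] at h2
  rw [h1, h2]

lemma le_of_zero_run {p q z : ℕ} (hq : q ≤ p + z) (hz : ∀ i < z, X (q + i) = 0)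
    (hne : X (p + z) ≠ 0) : q ≤ p := by
  by_contra! hpq
  refine hne ?_
  have := hz (p + z - q) (by omega)
  rwa [Nat.add_sub_cancel' hq] at this

lemma exists_mul_mem_Ico (hN : 0 < N) (m : ℕ) : ∃ i, N * i ∈ Ico m (m + N) := by
  refine ⟨(m + (N - 1)) / N, ?_, ?_⟩
  · have := Nat.lt_mul_div_succ (m + (N - 1)) hN
    rw [mul_add_one] at this
    omega
  · have := Nat.mul_div_le (m + (N - 1)) N
    omega

/-- The insertion times `P k` and lengths `L k` of the copied prefixes; the copy and the letter
after it occupy the positions in `Icc (P k) (P k + L k)`. -/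
structure IsInsertionScheme (L P : ℕ → ℕ) : Prop where
  three_le : 3 ≤ L 0
  pos : 0 < P 0
  strictMono : StrictMono L
  add_lt : ∀ k, P k + L k < P (k + 1)

lemma IsInsertionScheme.three_le_length {L P : ℕ → ℕ} (h : IsInsertionScheme L P) (k : ℕ) :
    3 ≤ L k :=
  h.three_le.trans (h.strictMono.monotone k.zero_le)

lemma IsInsertionScheme.strictMono_start {L P : ℕ → ℕ} (h : IsInsertionScheme L P) :
    StrictMono P :=
  strictMono_nat_of_lt_succ fun k => (Nat.le_add_right _ _).trans_lt (h.add_lt k)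

/-- The word `ω` contains at `P k` the prefix of `η` of length `L k` and no longer one, and has no
zero letters other than the two that begin each of these copies. -/
structure IsHost (L P : ℕ → ℕ) (η ω : ℕ → Option κ) : Prop where
  copy : ∀ k, ∀ l < L k, ω (P k + l) = η l
  ne_after_copy : ∀ k, ω (P k + L k) ≠ η (L k)
  eq_of_eq_none : ∀ i, ω i = none → ∃ k, i = P k ∨ i = P k + 1

/-- The sequence `v` of nonzero letters, preceded by the marker of two zero letters. -/
def markedWord (v : ℕ → κ) : ℕ → Option κ
  | 0 | 1 => none
  | l + 2 => some (v l)

lemma exists_marker_length {v : ℕ → κ} (hzero : D none = 0) (hne : ∃ j < N, D (some (v 0)) j ≠ 0)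
    (hY : HasBlocks D N (markedWord v) Y) :
    ∃ z, 2 * N ≤ z ∧ z < 3 * N ∧ (∀ i < z, Y i = 0) ∧ Y z ≠ 0 := by
  classical
  have hN : 0 < N := by omega
  have hex : ∃ z < 3 * N, Y z ≠ 0 := by
    obtain ⟨j, hj, hD⟩ := hne
    exact ⟨N * 2 + j, by omega, by rwa [hY 2 j hj]⟩
  obtain ⟨z, ⟨hlt, hz⟩, hmin⟩ : ∃ z, (z < 3 * N ∧ Y z ≠ 0) ∧ ∀ i < z, ¬(i < 3 * N ∧ Y i ≠ 0) :=
    ⟨Nat.find hex, Nat.find_spec hex, fun i hi => Nat.find_min hex hi⟩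
  refine ⟨z, ?_, hlt, fun i hi => of_not_not fun h => hmin i hi ⟨hi.trans hlt, h⟩, hz⟩
  by_contra! h
  refine hz ?_
  have hdiv : z / N < 2 := Nat.div_lt_of_lt_mul (by omega)
  have hYz := hY (z / N) _ (Nat.mod_lt z hN)
  rw [Nat.div_add_mod] at hYz
  interval_cases z / N <;> simpa [markedWord, hzero] using hYz

/-- A family of words of length `N` that determine their letters, with the zero word for `none`. -/
structure IsDigitFamily (D : Option κ → ℕ → ℤ) (N : ℕ) : Prop where
  none_eq : D none = 0
  inj : ∀ a b, (∀ j < N, D a j = D b j) → a = b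

-- The first nonzero digit of `Y` comes after a run of zeros that `X` only has at the start of a
-- copy, so the two runs align exactly.
lemma IsHost.exists_eq_of_occurrence {L P : ℕ → ℕ} {v : ℕ → κ} (hLP : IsInsertionScheme L P)
    (hD : IsDigitFamily D N) (h : IsHost L P (markedWord v) ω) (hX : HasBlocks D N ω X)
    (hY : HasBlocks D N (markedWord v) Y) {m n : ℕ} (hn : 3 * N ≤ n)
    (hocc : ∀ i < n, X (m + i) = Y i) :
    ∃ k, m = N * P k ∧ n < N * (L k + 1) := by
  have hne : ∃ j < N, D (some (v 0)) j ≠ 0 := by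
    by_contra! h0
    simpa using hD.inj (some (v 0)) none fun j hj => by rw [h0 j hj, hD.none_eq]; rfl
  have hN : 0 < N := hne.elim fun j hj => j.zero_le.trans_lt hj.1
  obtain ⟨z, hz2, hz3, hz0, hz⟩ := exists_marker_length hD.none_eq hne hY
  have hrun : ∀ i < z, X (m + i) = 0 := fun i hi => (hocc i (by omega)).trans (hz0 i hi)
  obtain ⟨i, hmi, him⟩ := exists_mul_mem_Ico hN m
  have hi : ω i = none := hD.inj _ _ fun j hj => by
    rw [← hX i j hj, hD.none_eq, ← Nat.add_sub_of_le hmi, add_assoc]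
    exact hrun _ (by omega)
  obtain ⟨k, hk⟩ := h.eq_of_eq_none i hi
  have hcopy : ∀ i < N * L k, X (N * P k + i) = Y i :=
    fun i hi => hX.eq_of_agree hY (h.copy k) hi
  have h3 : N * 3 ≤ N * L k := Nat.mul_le_mul_left N (hLP.three_le_length k)
  have hik : N * P k ≤ N * i ∧ N * i ≤ N * P k + N := by
    rcases hk with rfl | rfl
    · omega
    · rw [mul_add_one]; omega
  have hle : m ≤ N * P k :=
    le_of_zero_run (by omega) hrun (by rw [hcopy z (by omega)]; exact hz)
  have hge : N * P k ≤ m :=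
    le_of_zero_run (by omega) (fun i hi => (hcopy i (by omega)).trans (hz0 i hi))
      (by rw [hocc z (by omega)]; exact hz)
  refine ⟨k, hle.antisymm hge, ?_⟩
  by_contra! hlong
  refine h.ne_after_copy k (hD.inj _ _ fun j hj => ?_)
  rw [mul_add_one] at hlong
  rw [← hX _ j hj, ← hY _ j hj, ← hocc _ (by omega), hle.antisymm hge, mul_add, add_assoc]

end Occurrences

section Insertion

variable {κ α : Type*} {L P : ℕ → ℕ}

/-- The position `i` lies in none of the inserted blocks. -/
def IsFree (L P : ℕ → ℕ) (i : ℕ) : Prop := ∀ k, i ∉ Icc (P k) (P k + L k)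

noncomputable instance : DecidablePred (IsFree L P) := Classical.decPred _

lemma IsInsertionScheme.eq_of_mem_Icc (h : IsInsertionScheme L P) {i k k' : ℕ}
    (hk : i ∈ Icc (P k) (P k + L k)) (hk' : i ∈ Icc (P k') (P k' + L k')) : k = k' := by
  have hdisj {k k' : ℕ} (hk : i ≤ P k + L k) (hk' : P k' ≤ i) : k' ≤ k := by
    by_contra! hlt
    have : P (k + 1) ≤ P k' := h.strictMono_start.monotone hlt
    have := h.add_lt k
    omega
  exact (hdisj hk'.2 hk.1).antisymm (hdisj hk.2 hk'.1)

open scoped Classical in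
/-- The word that carries the block `B k` at the positions in `Icc (P k) (P k + L k)`, and `f`
elsewhere. -/
noncomputable def insertBlocks (L P : ℕ → ℕ) (B : ℕ → ℕ → α) (f : ℕ → α) (i : ℕ) : α :=
  if h : ∃ k, i ∈ Icc (P k) (P k + L k) then B h.choose (i - P h.choose) else f i

lemma insertBlocks_of_isFree (B : ℕ → ℕ → α) (f : ℕ → α) {i : ℕ} (h : IsFree L P i) :
    insertBlocks L P B f i = f i :=
  dif_neg (not_exists.2 h)

lemma insertBlocks_add (h : IsInsertionScheme L P) (B : ℕ → ℕ → α) (f : ℕ → α) {k l : ℕ}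
    (hl : l ≤ L k) : insertBlocks L P B f (P k + l) = B k l := by
  have hmem : P k + l ∈ Icc (P k) (P k + L k) := ⟨by omega, by omega⟩
  have hex : ∃ k', P k + l ∈ Icc (P k') (P k' + L k') := ⟨k, hmem⟩
  rw [insertBlocks, dif_pos hex, ← h.eq_of_mem_Icc hmem hex.choose_spec, Nat.add_sub_cancel_left]

/-- The host of the marked word of `v` whose free letters are given by `g`. The letter after the
copy of length `L k` is changed by `σ`, which is meant to have no fixed points. -/
noncomputable def hostWord (L P : ℕ → ℕ) (σ : κ → κ) (v g : ℕ → κ) : ℕ → Option κ :=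
  insertBlocks L P (fun k l => if l < L k then markedWord v l else some (σ (v (L k - 2))))
    fun i => some (g (Nat.count (IsFree L P) i))

lemma isHost_hostWord (h : IsInsertionScheme L P) {σ : κ → κ} (hσ : ∀ a, σ a ≠ a) (v g : ℕ → κ) :
    IsHost L P (markedWord v) (hostWord L P σ v g) where
  copy k l hl := (insertBlocks_add h _ _ hl.le).trans (if_pos hl)
  ne_after_copy k := by
    obtain ⟨l, hl⟩ := Nat.exists_eq_add_of_le' ((Nat.le_succ 2).trans (h.three_le_length k))
    rw [hostWord, insertBlocks_add h _ _ le_rfl, if_neg (lt_irrefl _), hl]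
    simpa [markedWord] using hσ (v l)
  eq_of_eq_none i hi := by
    by_cases hfree : IsFree L P i
    · simp [hostWord, insertBlocks_of_isFree _ _ hfree] at hi
    · obtain ⟨k, hk⟩ : ∃ k, i ∈ Icc (P k) (P k + L k) := by simpa [IsFree] using hfree
      obtain ⟨l, rfl⟩ := Nat.exists_eq_add_of_le hk.1
      rw [hostWord, insertBlocks_add h _ _ (by simpa using hk.2)] at hi
      refine ⟨k, ?_⟩
      split_ifs at hi
      match l, hi with
      | 0, _ => exact .inl rfl
      | 1, _ => exact .inr rfl

lemma eq_of_markedWord_eq {v v' : ℕ → κ} {i : ℕ} (h : ∀ k < i, markedWord v k = markedWord v' k)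
    {j : ℕ} (hj : j < i - 2) : v j = v' j :=
  Option.some_injective _ (h (j + 2) (by omega))

lemma exists_count_eq_of_lt_count {p : ℕ → Prop} [DecidablePred p] {n j : ℕ}
    (hj : j < Nat.count p n) : ∃ k < n, p k ∧ Nat.count p k = j := by
  induction n with
  | zero => simp at hj
  | succ n ih =>
    rcases lt_or_ge j (Nat.count p n) with hlt | hge
    · obtain ⟨k, hk, h⟩ := ih hlt
      exact ⟨k, by omega, h⟩
    · rw [Nat.count_succ] at hj
      split_ifs at hj with hp
      exacts [⟨n, by omega, hp, by omega⟩, by omega]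

lemma eq_of_hostWord_eq {σ : κ → κ} {v v' g g' : ℕ → κ} {i : ℕ}
    (h : ∀ k < i, hostWord L P σ v g k = hostWord L P σ v' g' k) {j : ℕ}
    (hj : j < Nat.count (IsFree L P) i) : g j = g' j := by
  obtain ⟨k, hk, hfree, rfl⟩ := exists_count_eq_of_lt_count hj
  have := h k hk
  rw [hostWord, hostWord, insertBlocks_of_isFree _ _ hfree, insertBlocks_of_isFree _ _ hfree]
    at this
  exact Option.some_injective _ this

lemma IsInsertionScheme.le_count_isFree_add (h : IsInsertionScheme L P) {i k : ℕ}
    (hi : i ≤ P (k + 1)) : i ≤ Nat.count (IsFree L P) i + (k + 1) * (L k + 1) := by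
  have hsub : (Finset.range i).filter (fun j => ¬ IsFree L P j) ⊆
      (Finset.range (k + 1)).biUnion fun l => Finset.Icc (P l) (P l + L l) := fun j hj => by
    rw [Finset.mem_filter, Finset.mem_range, IsFree, not_forall_not] at hj
    obtain ⟨hji, l, hl⟩ := hj
    have : l < k + 1 := h.strictMono_start.lt_iff_lt.1 (hl.1.trans_lt (hji.trans_le hi))
    simpa using ⟨l, Nat.le_of_lt_succ this, hl⟩
  have hcard := (Finset.card_le_card hsub).trans
    (Finset.card_biUnion_le_card_mul _ _ (L k + 1) fun l hl => by
      have := h.strictMono.monotone (Nat.le_of_lt_succ (Finset.mem_range.1 hl))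
      simp only [Nat.card_Icc]
      omega)
  have hsplit := Finset.card_filter_add_card_filter_not (s := Finset.range i) (IsFree L P)
  rw [← Nat.count_eq_card_filter_range] at hsplit
  simp only [Finset.card_range] at hcard hsplit
  omega

lemma IsInsertionScheme.exists_le_count_isFree_add (h : IsInsertionScheme L P)
    (hsparse : Tendsto (fun k => ((k + 1) * (L k + 1) : ℝ) / P k) atTop (𝓝 0)) {τ : ℝ}
    (hτ : τ < 1) : ∃ C : ℕ, ∀ i : ℕ, τ * i ≤ Nat.count (IsFree L P) i + C := by
  obtain ⟨K, hK⟩ := (hsparse.eventually_le_const (sub_pos.2 hτ)).exists_forall_of_atTop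
  refine ⟨P K, fun i => ?_⟩
  rcases le_or_gt i (P K) with hi | hi
  · have h1 : (i : ℝ) ≤ P K := by exact_mod_cast hi
    have h2 : τ * i ≤ i := mul_le_of_le_one_left i.cast_nonneg hτ.le
    linarith [(Nat.count (IsFree L P) i).cast_nonneg (α := ℝ)]
  · obtain ⟨k, hki, hik⟩ := h.strictMono_start.exists_between_of_tendsto_atTop
      h.strictMono_start.tendsto_atTop ((h.strictMono_start.monotone K.zero_le).trans_lt hi)
    have hKk : K < k + 1 := h.strictMono_start.lt_iff_lt.1 (hi.trans_le hik)
    have hPk : (0 : ℝ) < P k := by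
      exact_mod_cast h.pos.trans_le (h.strictMono_start.monotone k.zero_le)
    have h1 := (div_le_iff₀ hPk).1 (hK k (by omega))
    have h2 : (i : ℝ) ≤ Nat.count (IsFree L P) i + (k + 1) * (L k + 1) := by
      exact_mod_cast h.le_count_isFree_add hik
    have h3 : (1 - τ) * P k ≤ (1 - τ) * i :=
      mul_le_mul_of_nonneg_left (by exact_mod_cast hki.le) (sub_pos.2 hτ).le
    linarith [(P K).cast_nonneg (α := ℝ)]

end Insertion

section WaitingTime

variable {β x y : ℝ} {m n : ℕ}

lemma waitingRatio_le (hm : 1 ≤ m) (h : ∀ i < n, betaDigit β x (m + i) = betaDigit β y i) :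
    waitingRatio β x y n ≤ ((Real.log m / n : ℝ) : EReal) := by
  have hle : waitingTime β x y n ≤ m :=
    sInf_le ⟨m, rfl, hm, fun i hi => (betaDigit_iterate β x m i).trans (h i hi)⟩
  have htop : waitingTime β x y n ≠ ⊤ := (hle.trans_lt (ENat.natCast_lt_top m)).ne
  rw [waitingRatio, dif_neg htop, EReal.coe_le_coe_iff]
  gcongr
  · have hpos : 1 ≤ waitingTime β x y n := le_sInf fun _ ⟨m, hk, hm, _⟩ => by
      rw [hk]
      exact_mod_cast hm
    exact_mod_cast (WithTop.le_untop_iff htop).2 hpos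
  · exact (WithTop.untop_le_iff htop).2 hle

lemma le_waitingRatio (hm : 1 ≤ m)
    (h : ∀ m', 1 ≤ m' → (∀ i < n, betaDigit β x (m' + i) = betaDigit β y i) → m ≤ m') :
    ((Real.log m / n : ℝ) : EReal) ≤ waitingRatio β x y n := by
  have hle : (m : ℕ∞) ≤ waitingTime β x y n := le_sInf fun _ ⟨m', hk, hm', hocc⟩ => by
    rw [hk]
    exact_mod_cast h m' hm' fun i hi => (betaDigit_iterate β x m' i).symm.trans (hocc i hi)
  rw [waitingRatio]
  split_ifs with htop
  · exact le_top
  · rw [EReal.coe_le_coe_iff]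
    gcongr
    exact (WithTop.le_untop_iff htop).2 hle

variable {κ : Type*} {N : ℕ} {L P : ℕ → ℕ} {e : Option κ → ℝ} {v : ℕ → κ} {ω : ℕ → Option κ}

lemma hasBlocks_betaDigit_code (hβ : 0 < β) (he : ∀ a, IsLetter β N (e a)) (ω : ℕ → Option κ) :
    HasBlocks (fun a => betaDigit β (e a)) N ω (betaDigit β (code β N fun i => e (ω i))) :=
  fun i _ hj => betaDigit_code hβ (fun i => he (ω i)) i hj

lemma isDigitFamily_betaDigit (hβ : 0 < β) (he : ∀ a, IsLetter β N (e a))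
    (hinj : Function.Injective e) (h0 : e none = 0) :
    IsDigitFamily (fun a => betaDigit β (e a)) N where
  none_eq := by
    ext j
    rw [h0, betaDigit_zero_left]
    rfl
  inj a b h := hinj ((he a).eq_of_digit_eq hβ (he b).1 h)

lemma IsHost.waitingRatio_le (hβ : 0 < β) (he : ∀ a, IsLetter β N (e a))
    (hLP : IsInsertionScheme L P) (hN : 0 < N) (h : IsHost L P (markedWord v) ω) {k : ℕ}
    (hn : n ≤ N * L k) :
    waitingRatio β (code β N fun i => e (ω i)) (code β N fun i => e (markedWord v i)) n ≤
      ((Real.log (N * P k : ℕ) / n : ℝ) : EReal) := by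
  have hP : 0 < P k := hLP.pos.trans_le (hLP.strictMono_start.monotone k.zero_le)
  exact BetaExpansion.waitingRatio_le (Nat.mul_pos hN hP) fun i hi =>
    (hasBlocks_betaDigit_code hβ he ω).eq_of_agree (hasBlocks_betaDigit_code hβ he _) (h.copy k)
      (hi.trans_le hn)

lemma IsHost.le_waitingRatio (hβ : 0 < β) (he : ∀ a, IsLetter β N (e a))
    (hinj : Function.Injective e) (h0 : e none = 0) (hLP : IsInsertionScheme L P) (hN : 0 < N)
    (h : IsHost L P (markedWord v) ω) {k : ℕ} (hn : N * L k + N ≤ n) :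
    ((Real.log (N * P (k + 1) : ℕ) / n : ℝ) : EReal) ≤
      waitingRatio β (code β N fun i => e (ω i)) (code β N fun i => e (markedWord v i)) n := by
  have hP : 0 < P (k + 1) := hLP.pos.trans_le (hLP.strictMono_start.monotone (Nat.zero_le _))
  have h3 : N * 3 ≤ N * L k := Nat.mul_le_mul_left N (hLP.three_le_length k)
  refine BetaExpansion.le_waitingRatio (Nat.mul_pos hN hP) fun m _ hocc => ?_
  obtain ⟨k', rfl, hlt⟩ := h.exists_eq_of_occurrence hLP (isDigitFamily_betaDigit hβ he hinj h0)
    (hasBlocks_betaDigit_code hβ he ω) (hasBlocks_betaDigit_code hβ he _) (by omega) hocc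
  have hL : L k < L k' :=
    Nat.lt_of_succ_lt_succ (lt_of_mul_lt_mul_left ((mul_add_one N _).trans_le hn |>.trans_lt hlt)
      N.zero_le)
  exact Nat.mul_le_mul_left N (hLP.strictMono_start.monotone (hLP.strictMono.lt_iff_lt.1 hL))

end WaitingTime

section Limits

variable {α : Type*} [CompleteLinearOrder α] [TopologicalSpace α] [OrderTopology α]
  {r c : ℕ → α} {A B : α} {ℓ φ : ℕ → ℕ}

lemma exists_tendsto_index (hℓ : StrictMono ℓ) :
    ∃ κ : ℕ → ℕ, Tendsto κ atTop atTop ∧ ∀ n, ℓ 0 < n → ℓ (κ n) < n ∧ n ≤ ℓ (κ n + 1) := by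
  choose! κ hκ using fun n (hn : ℓ 0 < n) =>
    hℓ.exists_between_of_tendsto_atTop hℓ.tendsto_atTop hn
  refine ⟨κ, tendsto_atTop.2 fun K => ?_, hκ⟩
  filter_upwards [eventually_gt_atTop (ℓ K)] with n hn
  have hn0 : ℓ 0 < n := (hℓ.monotone K.zero_le).trans_lt hn
  exact Nat.le_of_lt_succ (hℓ.lt_iff_lt.1 (hn.trans_le (hκ n hn0).2))

lemma le_liminf_of_le_on_Ioc (hℓ : StrictMono ℓ) (hc : Tendsto c atTop (𝓝 A))
    (h : ∀ k, ∀ n ∈ Ioc (ℓ k) (ℓ (k + 1)), c k ≤ r n) : A ≤ liminf r atTop := by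
  obtain ⟨κ, hκ, hκℓ⟩ := exists_tendsto_index hℓ
  rw [← (hc.comp hκ).liminf_eq]
  refine liminf_le_liminf ?_
  filter_upwards [eventually_gt_atTop (ℓ 0)] with n hn using h _ n (hκℓ n hn)

lemma limsup_le_of_le_on_Ioc (hℓ : StrictMono ℓ) (hc : Tendsto c atTop (𝓝 A))
    (h : ∀ k, ∀ n ∈ Ioc (ℓ k) (ℓ (k + 1)), r n ≤ c k) : limsup r atTop ≤ A :=
  le_liminf_of_le_on_Ioc (α := αᵒᵈ) hℓ hc h

lemma liminf_le_of_subseq_le (hφ : Tendsto φ atTop atTop) (hc : Tendsto c atTop (𝓝 A))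
    (h : ∀ k, r (φ k) ≤ c k) : liminf r atTop ≤ A := by
  rw [← hc.liminf_eq]
  exact (liminf_le_liminf_of_le hφ).trans (liminf_le_liminf (.of_forall h))

lemma le_limsup_of_le_subseq (hφ : Tendsto φ atTop atTop) (hc : Tendsto c atTop (𝓝 A))
    (h : ∀ k, c k ≤ r (φ k)) : A ≤ limsup r atTop :=
  liminf_le_of_subseq_le (α := αᵒᵈ) hφ hc h

end Limits

section ERealLimits

variable {c u : ℕ → ℝ} {A : EReal}

lemma tendsto_coe_mul_of_tendsto_one (hc : Tendsto (fun k => (c k : EReal)) atTop (𝓝 A))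
    (hu : Tendsto u atTop (𝓝 1)) : Tendsto (fun k => ((c k * u k : ℝ) : EReal)) atTop (𝓝 A) := by
  have hu' : Tendsto (fun k => (u k : EReal)) atTop (𝓝 (1 : ℝ)) := EReal.tendsto_coe.2 hu
  have hmul := (EReal.continuousAt_mul (p := (A, ((1 : ℝ) : EReal))) (.inr (EReal.coe_ne_bot 1))
    (.inr (EReal.coe_ne_top 1)) (by simp) (by simp)).tendsto.comp (hc.prodMk_nhds hu')
  simpa [Function.comp_def] using hmul

lemma tendsto_coe_add_of_tendsto_zero (hc : Tendsto (fun k => (c k : EReal)) atTop (𝓝 A))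
    (hu : Tendsto u atTop (𝓝 0)) : Tendsto (fun k => ((c k + u k : ℝ) : EReal)) atTop (𝓝 A) := by
  have hu' : Tendsto (fun k => (u k : EReal)) atTop (𝓝 (0 : ℝ)) := EReal.tendsto_coe.2 hu
  have hadd := (EReal.continuousAt_add (p := (A, ((0 : ℝ) : EReal))) (.inr (EReal.coe_ne_bot 0))
    (.inr (EReal.coe_ne_top 0))).tendsto.comp (hc.prodMk_nhds hu')
  simpa [Function.comp_def] using hadd

lemma exists_tendsto_coe_of_nonneg (hA : 0 ≤ A) :
    ∃ a : ℕ → ℝ, (∀ k : ℕ, 1 / (k + 1 : ℝ) ≤ a k) ∧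
      Tendsto (fun k => (a k : EReal)) atTop (𝓝 A) := by
  induction A with
  | bot => simp at hA
  | coe r =>
    refine ⟨fun k => r + 1 / (k + 1), fun k => le_add_of_nonneg_left (EReal.coe_nonneg.1 hA), ?_⟩
    exact tendsto_coe_add_of_tendsto_zero tendsto_const_nhds tendsto_one_div_add_atTop_nhds_zero_nat
  | top =>
    refine ⟨fun k => k + 1, fun k => ?_, EReal.tendsto_coe_nhds_top_iff.2
      (tendsto_atTop_add_const_right _ _ tendsto_natCast_atTop_atTop)⟩
    have hk : (1 : ℝ) ≤ k + 1 := by simp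
    exact (div_le_one_of_le₀ hk (by positivity)).trans hk

lemma exists_le_tendsto_coe {B : EReal} (hA : 0 ≤ A) (hAB : A ≤ B) :
    ∃ a b : ℕ → ℝ, (∀ k : ℕ, 1 / (k + 1 : ℝ) ≤ a k) ∧ (∀ k, a k ≤ b k) ∧
      Tendsto (fun k => (a k : EReal)) atTop (𝓝 A) ∧
      Tendsto (fun k => (b k : EReal)) atTop (𝓝 B) := by
  obtain ⟨a, ha, hatends⟩ := exists_tendsto_coe_of_nonneg hA
  obtain ⟨b, -, hbtends⟩ := exists_tendsto_coe_of_nonneg (hA.trans hAB)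
  refine ⟨a, fun k => max (a k) (b k), ha, fun k => le_max_left _ _, hatends, ?_⟩
  simpa only [EReal.coe_strictMono.monotone.map_max, max_eq_right hAB] using hatends.max hbtends

end ERealLimits

section Parameters

/-- The start of the copy that follows one of length `l`: an integer of size about `exp (b N l)`.
The polynomial factor leaves room for the free positions. -/
noncomputable def nextStart (N : ℕ) (b : ℝ) (l : ℕ) : ℕ :=
  ⌈((l : ℝ) + 2) ^ 4 * Real.exp (b * (N * l))⌉₊

/-- The lengths of the copied prefixes: as short as `log (N P) / (N L) ≤ a` and strict monotonicity
permit. -/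
noncomputable def lengths (N : ℕ) (a b : ℕ → ℝ) : ℕ → ℕ
  | 0 => 3
  | k + 1 => max (lengths N a b k + 1)
      ⌈Real.log (N * nextStart N (b k) (lengths N a b k) : ℕ) / (N * a (k + 1))⌉₊

/-- The starts of the copies of the prefixes of length `lengths N a b k`. -/
noncomputable def starts (N : ℕ) (a b : ℕ → ℝ) : ℕ → ℕ
  | 0 => 1
  | k + 1 => nextStart N (b k) (lengths N a b k)

variable {N : ℕ} {a b : ℕ → ℝ}

lemma lengths_succ (N : ℕ) (a b : ℕ → ℝ) (k : ℕ) :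
    lengths N a b (k + 1) = max (lengths N a b k + 1)
      ⌈Real.log (N * starts N a b (k + 1) : ℕ) / (N * a (k + 1))⌉₊ :=
  rfl

lemma strictMono_lengths (N : ℕ) (a b : ℕ → ℝ) : StrictMono (lengths N a b) :=
  strictMono_nat_of_lt_succ fun _ => Nat.lt_of_succ_le (le_max_left _ _)

lemma add_three_le_lengths (N : ℕ) (a b : ℕ → ℝ) (k : ℕ) : k + 3 ≤ lengths N a b k := by
  induction k with
  | zero => exact le_rfl
  | succ k ih => exact (Nat.succ_le_succ ih).trans (le_max_left _ _)

lemma pow_mul_exp_le_starts_succ (N : ℕ) (a b : ℕ → ℝ) (k : ℕ) :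
    ((lengths N a b k : ℝ) + 2) ^ 4 * Real.exp (b k * (N * lengths N a b k)) ≤
      starts N a b (k + 1) :=
  Nat.le_ceil _

lemma starts_pos (N : ℕ) (a b : ℕ → ℝ) (k : ℕ) : 0 < starts N a b k := by
  cases k with
  | zero => exact one_pos
  | succ k => exact Nat.ceil_pos.2 (by positivity)

lemma log_starts_succ_le (hN : 0 < N) (ha : ∀ k, 0 < a k) (k : ℕ) :
    Real.log (N * starts N a b (k + 1) : ℕ) ≤ a (k + 1) * (N * lengths N a b (k + 1)) := by
  have hpos : 0 < N * a (k + 1) := mul_pos (by exact_mod_cast hN) (ha _)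
  have hceil := (Nat.le_ceil (Real.log (N * starts N a b (k + 1) : ℕ) / (N * a (k + 1)))).trans
    (Nat.cast_le.2 (le_max_right (lengths N a b k + 1) _))
  rw [← lengths_succ, div_le_iff₀ hpos] at hceil
  linarith

lemma mul_le_log_starts_succ (hN : 0 < N) (k : ℕ) :
    b k * (N * lengths N a b k) ≤ Real.log (N * starts N a b (k + 1) : ℕ) := by
  rw [Real.le_log_iff_exp_le (by exact_mod_cast Nat.mul_pos hN (starts_pos N a b (k + 1)))]
  have h1 : (1 : ℝ) ≤ ((lengths N a b k : ℝ) + 2) ^ 4 :=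
    one_le_pow₀ (by linarith [(lengths N a b k).cast_nonneg (α := ℝ)])
  calc Real.exp (b k * (N * lengths N a b k))
      ≤ ((lengths N a b k : ℝ) + 2) ^ 4 * Real.exp (b k * (N * lengths N a b k)) :=
        le_mul_of_one_le_left (Real.exp_pos _).le h1
    _ ≤ starts N a b (k + 1) := pow_mul_exp_le_starts_succ N a b k
    _ ≤ (N * starts N a b (k + 1) : ℕ) := Nat.cast_le.2 (Nat.le_mul_of_pos_left _ hN)

lemma log_starts_succ_le_add (hN : 0 < N) (hb : ∀ k, 0 ≤ b k) (k : ℕ) :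
    Real.log (N * starts N a b (k + 1) : ℕ) ≤
      b k * (N * lengths N a b k) + (4 * Real.log (lengths N a b k + 2) + Real.log (2 * N)) := by
  set l := lengths N a b k
  have : (0 : ℝ) < N := by exact_mod_cast hN
  have h1 : (1 : ℝ) ≤ (l + 2) ^ 4 * Real.exp (b k * (N * l)) :=
    one_le_mul_of_one_le_of_one_le (one_le_pow₀ (by linarith [l.cast_nonneg (α := ℝ)]))
      (Real.one_le_exp (mul_nonneg (hb k) (by positivity)))
  have hceil : (starts N a b (k + 1) : ℝ) ≤ 2 * ((l + 2) ^ 4 * Real.exp (b k * (N * l))) :=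
    Nat.ceil_le_two_mul (by linarith)
  calc Real.log (N * starts N a b (k + 1) : ℕ)
      ≤ Real.log (2 * N * ((l + 2) ^ 4 * Real.exp (b k * (N * l)))) := by
        have := starts_pos N a b (k + 1)
        push_cast
        gcongr Real.log ?_
        nlinarith
    _ = _ := by
        rw [Real.log_mul (by positivity) (by positivity),
          Real.log_mul (x := ((l : ℝ) + 2) ^ 4) (by positivity) (by positivity), Real.log_pow,
          Real.log_exp]
        push_cast
        ring

lemma min_mul_le_log_starts_succ (hN : 0 < N) (ha : ∀ k, 0 < a k) (k : ℕ) :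
    min (a (k + 1)) (b k) * (N * (lengths N a b (k + 1) - 1)) ≤
      Real.log (N * starts N a b (k + 1) : ℕ) := by
  have hN' : (0 : ℝ) < N := by exact_mod_cast hN
  have hL : (1 : ℝ) ≤ lengths N a b (k + 1) := by
    exact_mod_cast (add_three_le_lengths N a b (k + 1)).trans' (by omega)
  have hlen : (0 : ℝ) ≤ N * (lengths N a b (k + 1) - 1) := by nlinarith
  rcases max_choice (lengths N a b k + 1)
    ⌈Real.log (N * starts N a b (k + 1) : ℕ) / (N * a (k + 1))⌉₊ with h | h <;>
    rw [← lengths_succ] at h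
  · refine (mul_le_mul_of_nonneg_right (min_le_right _ _) hlen).trans ?_
    rw [h, Nat.cast_add_one, add_sub_cancel_right]
    exact mul_le_log_starts_succ hN k
  · refine (mul_le_mul_of_nonneg_right (min_le_left _ _) hlen).trans ?_
    have hden : 0 < N * a (k + 1) := mul_pos hN' (ha _)
    have hceil := Nat.ceil_lt_add_one
      (div_nonneg (Real.log_natCast_nonneg (N * starts N a b (k + 1))) hden.le)
    rw [← h, ← sub_lt_iff_lt_add, lt_div_iff₀ hden] at hceil
    linarith

lemma starts_le_exp (hN : 0 < N) (ha : ∀ k, 0 < a k) (k : ℕ) :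
    (starts N a b k : ℝ) ≤ Real.exp (a k * (N * lengths N a b k)) := by
  cases k with
  | zero => simpa [starts] using mul_nonneg (ha 0).le (by positivity)
  | succ k =>
    have hpos : 0 < N * starts N a b (k + 1) := Nat.mul_pos hN (starts_pos N a b (k + 1))
    have hlog := (Real.log_le_iff_le_exp (by exact_mod_cast hpos)).1 (log_starts_succ_le hN ha k)
    exact (Nat.cast_le.2 (Nat.le_mul_of_pos_left _ hN)).trans hlog

lemma isInsertionScheme_lengths_starts (hN : 0 < N) (ha : ∀ k, 0 < a k) (hab : ∀ k, a k ≤ b k) :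
    IsInsertionScheme (lengths N a b) (starts N a b) where
  three_le := le_rfl
  pos := one_pos
  strictMono := strictMono_lengths N a b
  add_lt k := by
    set l := lengths N a b k
    set E := Real.exp (b k * (N * l))
    have hE1 : 1 ≤ E := Real.one_le_exp (mul_nonneg ((ha k).le.trans (hab k)) (by positivity))
    have hl0 : (0 : ℝ) ≤ l := l.cast_nonneg
    have hstart : (starts N a b k : ℝ) ≤ E := (starts_le_exp hN ha k).trans <|
      Real.exp_le_exp.2 (mul_le_mul_of_nonneg_right (hab k) (by positivity))
    have hpow : (l : ℝ) + 1 < (l + 2) ^ 4 := by nlinarith [pow_nonneg hl0 3, pow_nonneg hl0 4]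
    have : (starts N a b k + l : ℝ) < starts N a b (k + 1) := calc
      (starts N a b k + l : ℝ) ≤ (l + 1) * E := by nlinarith
      _ < (l + 2) ^ 4 * E := by gcongr
      _ ≤ starts N a b (k + 1) := pow_mul_exp_le_starts_succ N a b k
    exact_mod_cast this

lemma lengths_succ_add_one_le (hN : 0 < N) (ha : ∀ k : ℕ, 1 / (k + 1 : ℝ) ≤ a k) (k : ℕ) :
    (lengths N a b (k + 1) + 1 : ℝ) ≤
      (lengths N a b k + 2) * (Real.log (N * starts N a b (k + 1) : ℕ) + 2) := by
  set w := Real.log (N * starts N a b (k + 1) : ℕ)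
  set l := lengths N a b k
  have hw : 0 ≤ w := Real.log_natCast_nonneg _
  have hl : (k : ℝ) + 3 ≤ l := by exact_mod_cast add_three_le_lengths N a b k
  have hceil : w / (N * a (k + 1)) ≤ w * (k + 2) := by
    have hinv : 1 / (k + 2 : ℝ) ≤ N * a (k + 1) := by
      have h1 : 1 / (k + 2 : ℝ) ≤ a (k + 1) := by
        convert ha (k + 1) using 2
        push_cast
        ring
      have h2 : (1 : ℝ) ≤ N := by exact_mod_cast hN
      exact h1.trans (le_mul_of_one_le_left (le_trans (by positivity) h1) h2)
    calc w / (N * a (k + 1)) ≤ w / (1 / (k + 2)) := by gcongr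
      _ = w * (k + 2) := by rw [div_div_eq_mul_div, div_one]
  have hlt := Nat.ceil_lt_add_one (a := w * (k + 2)) (by positivity)
  have hle : (⌈w / (N * a (k + 1))⌉₊ : ℝ) ≤ ⌈w * (k + 2)⌉₊ := by exact_mod_cast Nat.ceil_mono hceil
  rw [lengths_succ, Nat.cast_max, ← le_sub_iff_add_le]
  refine max_le ?_ ?_
  · push_cast
    nlinarith
  · nlinarith

lemma tendsto_starts (hN : 0 < N) (ha : ∀ k, 0 < a k) (hab : ∀ k, a k ≤ b k) :
    Tendsto (starts N a b) atTop atTop :=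
  (isInsertionScheme_lengths_starts hN ha hab).strictMono_start.tendsto_atTop

lemma tendsto_log_mul_add_div_sqrt {N : ℕ} (hN : 0 < N) (C : ℝ) :
    Tendsto (fun p : ℕ => (Real.log (N * p : ℕ) + C) / √p) atTop (𝓝 0) := by
  have hlog : Tendsto (fun p : ℝ => Real.log p / p ^ (1 / 2 : ℝ)) atTop (𝓝 0) :=
    (isLittleO_log_rpow_atTop one_half_pos).tendsto_div_nhds_zero
  have hconst : Tendsto (fun p : ℝ => (Real.log N + C) / p ^ (1 / 2 : ℝ)) atTop (𝓝 0) :=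
    tendsto_const_nhds.div_atTop (tendsto_rpow_atTop one_half_pos)
  have hsum := (hlog.add hconst).comp tendsto_natCast_atTop_atTop
  rw [add_zero] at hsum
  refine hsum.congr' ?_
  filter_upwards [eventually_gt_atTop 0] with p hp
  rw [Nat.cast_mul, Real.log_mul (by exact_mod_cast hN.ne') (by exact_mod_cast hp.ne'),
    Real.sqrt_eq_rpow, Function.comp_apply]
  ring

lemma tendsto_mul_lengths_div_starts (hN : 0 < N) (ha : ∀ k : ℕ, 1 / (k + 1 : ℝ) ≤ a k)
    (hab : ∀ k, a k ≤ b k) :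
    Tendsto (fun k => ((k + 1) * (lengths N a b k + 1) : ℝ) / starts N a b k) atTop (𝓝 0) := by
  have ha0 : ∀ k, 0 < a k := fun k => lt_of_lt_of_le (by positivity) (ha k)
  rw [← tendsto_add_atTop_iff_nat 1]
  refine squeeze_zero (fun k => by positivity) (fun k => ?_)
    (((tendsto_log_mul_add_div_sqrt hN 2).comp (tendsto_starts hN ha0 hab)).comp
      (tendsto_add_atTop_nat 1))
  set l := lengths N a b k
  set p := starts N a b (k + 1)
  have hp : (0 : ℝ) < p := by exact_mod_cast starts_pos N a b (k + 1)
  have : 0 ≤ Real.log (N * p : ℕ) := Real.log_natCast_nonneg _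
  have hl : (k : ℝ) + 3 ≤ l := by exact_mod_cast add_three_le_lengths N a b k
  have hsqrt : (l + 2 : ℝ) ^ 2 ≤ √p := by
    refine Real.le_sqrt_of_sq_le ((?_ : _ ≤ _).trans (pow_mul_exp_le_starts_succ N a b k))
    rw [← pow_mul]
    exact le_mul_of_one_le_right (by positivity)
      (Real.one_le_exp (mul_nonneg ((ha0 k).le.trans (hab k)) (by positivity)))
  calc (((k + 1 : ℕ) + 1) * (lengths N a b (k + 1) + 1) : ℝ) / p
      ≤ (l + 2) * ((l + 2) * (Real.log (N * p : ℕ) + 2)) / p := by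
        refine div_le_div_of_nonneg_right (mul_le_mul ?_ (lengths_succ_add_one_le hN ha k)
          (by positivity) (by positivity)) hp.le
        push_cast
        linarith
    _ ≤ √p * (Real.log (N * p : ℕ) + 2) / p := by
        rw [← mul_assoc, ← sq]
        gcongr
    _ = (Real.log (N * p : ℕ) + 2) / √p := by
        rw [mul_comm, mul_div_assoc, Real.sqrt_div_self', mul_one_div]

/-- The prefixes have exponents `A` and `B` when measured against the start of their own copy and
of the next one. -/
structure HasWaitingExponents (N : ℕ) (L P : ℕ → ℕ) (A B : EReal) : Prop where
  own : Tendsto (fun k => ((Real.log (N * P k : ℕ) / (N * L k : ℕ) : ℝ) : EReal)) atTop (𝓝 A)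
  next : Tendsto (fun k => ((Real.log (N * P (k + 1) : ℕ) / (N * L k : ℕ) : ℝ) : EReal)) atTop
    (𝓝 B)

lemma tendsto_log_starts_div {A B : EReal} (hN : 0 < N) (ha : ∀ k, 0 < a k) (hAB : A ≤ B)
    (hA : Tendsto (fun k => (a k : EReal)) atTop (𝓝 A))
    (hB : Tendsto (fun k => (b k : EReal)) atTop (𝓝 B)) :
    Tendsto (fun k => ((Real.log (N * starts N a b k : ℕ) / (N * lengths N a b k : ℕ) : ℝ) : EReal))
      atTop (𝓝 A) := by
  rw [← tendsto_add_atTop_iff_nat 1]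
  have hA' : Tendsto (fun k => (a (k + 1) : EReal)) atTop (𝓝 A) :=
    hA.comp (tendsto_add_atTop_nat 1)
  have hmin : Tendsto (fun k => ((min (a (k + 1)) (b k) : ℝ) : EReal)) atTop (𝓝 A) := by
    simpa only [EReal.coe_strictMono.monotone.map_min, min_eq_left hAB] using hA'.min hB
  have hlen := (tendsto_natCast_atTop_atTop (R := ℝ)).comp
    ((strictMono_lengths N a b).tendsto_atTop.comp (tendsto_add_atTop_nat 1))
  have hratio : Tendsto (fun k => 1 - ((lengths N a b (k + 1) : ℕ) : ℝ)⁻¹) atTop (𝓝 1) := by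
    simpa using (tendsto_inv_atTop_zero.comp hlen).const_sub 1
  have hpos (k : ℕ) : (0 : ℝ) < (N * lengths N a b (k + 1) : ℕ) := by
    exact_mod_cast Nat.mul_pos hN ((Nat.succ_pos _).trans_le (add_three_le_lengths N a b (k + 1)))
  refine tendsto_of_tendsto_of_tendsto_of_le_of_le
    (tendsto_coe_mul_of_tendsto_one hmin hratio) hA' (fun k => ?_) fun k => ?_
  · rw [EReal.coe_le_coe_iff, le_div_iff₀ (hpos k)]
    refine (Eq.le ?_).trans (min_mul_le_log_starts_succ hN ha k)
    have hinv : (lengths N a b (k + 1) : ℝ) * (lengths N a b (k + 1) : ℝ)⁻¹ = 1 :=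
      mul_inv_cancel₀ (right_ne_zero_of_mul (Nat.cast_mul (α := ℝ) N _ ▸ (hpos k).ne'))
    push_cast
    linear_combination (-min (a (k + 1)) (b k) * N) * hinv
  · rw [EReal.coe_le_coe_iff, div_le_iff₀ (hpos k), Nat.cast_mul N (lengths N a b (k + 1))]
    exact log_starts_succ_le hN ha k

lemma tendsto_log_add_const_div (hN : 0 < N) (C D : ℝ) :
    Tendsto (fun l : ℕ => (C * Real.log (l + 2) + D) / (N * l)) atTop (𝓝 0) := by
  have htop : Tendsto (fun l : ℕ => (l : ℝ)) atTop atTop := tendsto_natCast_atTop_atTop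
  have hlin : (fun l : ℕ => (l : ℝ) + 2) =O[atTop] fun l : ℕ => (l : ℝ) :=
    (Asymptotics.isBigO_refl _ _).add
      (Asymptotics.isLittleO_const_left.2 (.inr (tendsto_norm_atTop_atTop.comp htop))).isBigO
  have hlog : (fun l : ℕ => C * Real.log (l + 2)) =o[atTop] fun l : ℕ => (l : ℝ) :=
    ((Real.isLittleO_log_id_atTop.comp_tendsto
      (tendsto_atTop_add_const_right _ 2 htop)).trans_isBigO hlin).const_mul_left C
  have hconst : (fun _ : ℕ => D) =o[atTop] fun l : ℕ => (l : ℝ) :=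
    Asymptotics.isLittleO_const_left.2 (.inr (tendsto_norm_atTop_atTop.comp htop))
  exact ((hlog.add hconst).const_mul_right'
    (.mk0 _ (by exact_mod_cast hN.ne'))).tendsto_div_nhds_zero

lemma tendsto_log_starts_succ_div {B : EReal} (hN : 0 < N) (hb : ∀ k, 0 ≤ b k)
    (hB : Tendsto (fun k => (b k : EReal)) atTop (𝓝 B)) :
    Tendsto (fun k =>
        ((Real.log (N * starts N a b (k + 1) : ℕ) / (N * lengths N a b k : ℕ) : ℝ) : EReal))
      atTop (𝓝 B) := by
  have hpos (k : ℕ) : (0 : ℝ) < (N * lengths N a b k : ℕ) := by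
    exact_mod_cast Nat.mul_pos hN ((Nat.succ_pos _).trans_le (add_three_le_lengths N a b k))
  refine tendsto_of_tendsto_of_tendsto_of_le_of_le hB (tendsto_coe_add_of_tendsto_zero hB
    ((tendsto_log_add_const_div hN 4 (Real.log (2 * N))).comp
      (strictMono_lengths N a b).tendsto_atTop)) (fun k => ?_) fun k => ?_
  · rw [EReal.coe_le_coe_iff, le_div_iff₀ (hpos k), Nat.cast_mul]
    exact mul_le_log_starts_succ hN k
  · have hN' := hpos k
    rw [EReal.coe_le_coe_iff, div_le_iff₀ (hpos k), add_mul, Nat.cast_mul N (lengths N a b k),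
      Function.comp_apply, div_mul_cancel₀ _ (by exact_mod_cast hN'.ne')]
    exact log_starts_succ_le_add hN hb k

lemma exists_isInsertionScheme {A B : EReal} (hN : 0 < N) (hA : 0 ≤ A) (hAB : A ≤ B) :
    ∃ L P : ℕ → ℕ, IsInsertionScheme L P ∧ HasWaitingExponents N L P A B ∧
      Tendsto (fun k => ((k + 1) * (L k + 1) : ℝ) / P k) atTop (𝓝 0) := by
  obtain ⟨a, b, ha, hab, hatends, hbtends⟩ := exists_le_tendsto_coe hA hAB
  have ha0 : ∀ k, 0 < a k := fun k => lt_of_lt_of_le (by positivity) (ha k)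
  exact ⟨lengths N a b, starts N a b, isInsertionScheme_lengths_starts hN ha0 hab,
    ⟨tendsto_log_starts_div hN ha0 hAB hatends hbtends,
      tendsto_log_starts_succ_div hN (fun k => (ha0 k).le.trans (hab k)) hbtends⟩,
    tendsto_mul_lengths_div_starts hN ha hab⟩

end Parameters

section Exponents

lemma tendsto_div_add_natCast {w : ℕ → ℝ} {ℓ : ℕ → ℕ} {A : EReal} (hℓ : StrictMono ℓ)
    (h : Tendsto (fun k => ((w k / ℓ k : ℝ) : EReal)) atTop (𝓝 A)) (m : ℕ) :
    Tendsto (fun k => ((w k / (ℓ k + m : ℕ) : ℝ) : EReal)) atTop (𝓝 A) := by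
  refine (tendsto_coe_mul_of_tendsto_one h
    ((tendsto_natCast_div_add_atTop (m : ℝ)).comp hℓ.tendsto_atTop)).congr' ?_
  filter_upwards [hℓ.tendsto_atTop.eventually_gt_atTop 0] with k hk
  have hk' : (ℓ k : ℝ) ≠ 0 := by exact_mod_cast hk.ne'
  rw [Function.comp_apply, div_mul_div_cancel₀ hk', Nat.cast_add]

variable {β : ℝ} {κ : Type*} {N : ℕ} {L P : ℕ → ℕ} {e : Option κ → ℝ} {v : ℕ → κ}
  {ω : ℕ → Option κ} {A B : EReal}

lemma IsHost.liminf_waitingRatio (hβ : 0 < β) (he : ∀ a, IsLetter β N (e a))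
    (hinj : Function.Injective e) (h0 : e none = 0) (hLP : IsInsertionScheme L P) (hN : 0 < N)
    (hAB : HasWaitingExponents N L P A B) (h : IsHost L P (markedWord v) ω) :
    liminf (waitingRatio β (code β N fun i => e (ω i)) (code β N fun i => e (markedWord v i)))
      atTop = A := by
  have hℓ : StrictMono fun k => N * L k := hLP.strictMono.const_mul hN
  apply le_antisymm
  · exact liminf_le_of_subseq_le hℓ.tendsto_atTop hAB.own fun k =>
      h.waitingRatio_le hβ he hLP hN le_rfl
  · refine le_liminf_of_le_on_Ioc (hℓ.add_const N)
      ((tendsto_div_add_natCast hℓ hAB.own N).comp (tendsto_add_atTop_nat 1)) fun k n hn => ?_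
    refine le_trans ?_ (h.le_waitingRatio hβ he hinj h0 hLP hN hn.1.le)
    have hn0 : (0 : ℝ) < n := by exact_mod_cast (Nat.zero_le _).trans_lt hn.1
    exact EReal.coe_le_coe_iff.2 (div_le_div_of_nonneg_left (Real.log_natCast_nonneg _) hn0
      (Nat.cast_le.2 hn.2))

lemma IsHost.limsup_waitingRatio (hβ : 0 < β) (he : ∀ a, IsLetter β N (e a))
    (hinj : Function.Injective e) (h0 : e none = 0) (hLP : IsInsertionScheme L P) (hN : 0 < N)
    (hAB : HasWaitingExponents N L P A B) (h : IsHost L P (markedWord v) ω) :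
    limsup (waitingRatio β (code β N fun i => e (ω i)) (code β N fun i => e (markedWord v i)))
      atTop = B := by
  have hℓ : StrictMono fun k => N * L k := hLP.strictMono.const_mul hN
  apply le_antisymm
  · refine limsup_le_of_le_on_Ioc hℓ hAB.next fun k n hn => ?_
    refine (h.waitingRatio_le hβ he hLP hN hn.2).trans ?_
    have hpos : 0 < N * L k := Nat.mul_pos hN ((Nat.succ_pos 2).trans_le (hLP.three_le_length k))
    exact EReal.coe_le_coe_iff.2 (div_le_div_of_nonneg_left (Real.log_natCast_nonneg _)
      (Nat.cast_pos.2 hpos) (Nat.cast_le.2 hn.1.le))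
  · exact le_limsup_of_le_subseq (hℓ.add_const N).tendsto_atTop
      (tendsto_div_add_natCast hℓ hAB.next N) fun k =>
        h.le_waitingRatio hβ he hinj h0 hLP hN le_rfl

end Exponents

section Dimension

open scoped NNReal

lemma dimH_range_le_of_dist_le_rpow {ι X Y : Type*} [MetricSpace X] [MetricSpace Y] {f : ι → X}
    {g : ι → Y} {C r : ℝ≥0} (hr : 0 < r)
    (h : ∀ s t, dist (g s) (g t) ≤ C * dist (f s) (f t) ^ (r : ℝ)) :
    dimH (range g) ≤ dimH (range f) / r := by
  rcases isEmpty_or_nonempty Y with hY | hY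
  · simp [Set.eq_empty_of_isEmpty (range g)]
  have hr0 : (r : ℝ) ≠ 0 := by exact_mod_cast hr.ne'
  obtain ⟨φ, rfl⟩ := (Function.factorsThrough_iff g).1 fun s t (hst : f s = f t) =>
    dist_le_zero.1 <| (h s t).trans_eq <| by rw [hst, dist_self, Real.zero_rpow hr0, mul_zero]
  have hφ : HolderOnWith C r φ (range f) := by
    rintro _ ⟨s, rfl⟩ _ ⟨t, rfl⟩
    rw [edist_dist, edist_dist, ENNReal.ofReal_rpow_of_nonneg dist_nonneg r.coe_nonneg,
      ← ENNReal.ofReal_coe_nnreal, ← ENNReal.ofReal_mul C.coe_nonneg]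
    exact ENNReal.ofReal_le_ofReal (h s t)
  rw [range_comp]
  exact hφ.dimH_image_le hr

lemma inv_pow_le_mul_rpow {Q M τ : ℝ} {n C i : ℕ} (hQ : 1 ≤ Q) (hτ : 0 ≤ τ) (hM : Q ^ τ ≤ M)
    (hn : τ * i ≤ n + C) :
    (M ^ n)⁻¹ ≤ M ^ C * Q ^ (2 * τ ^ 2) * (1 / Q ^ (i + 2)) ^ (τ ^ 2) := by
  have hQ0 : 0 < Q := by linarith
  have hQτ : 1 ≤ Q ^ τ := Real.one_le_rpow hQ hτ
  have hM0 : 0 < M := by linarith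
  calc (M ^ n)⁻¹ = M ^ C * M ^ (-(n + C : ℝ)) := by
        rw [Real.rpow_neg hM0.le, ← Nat.cast_add, Real.rpow_natCast, pow_add]
        field_simp
    _ ≤ M ^ C * M ^ (-(τ * i)) := by
        gcongr
        linarith
    _ ≤ M ^ C * (Q ^ τ) ^ (-(τ * i)) := by
        gcongr ?_ * ?_
        exact Real.rpow_le_rpow_of_nonpos (by linarith) hM (neg_nonpos.2 (by positivity))
    _ = M ^ C * Q ^ (2 * τ ^ 2) * (1 / Q ^ (i + 2)) ^ (τ ^ 2) := by
        rw [mul_assoc, one_div, ← Real.rpow_natCast Q, ← Real.rpow_neg hQ0.le,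
          ← Real.rpow_mul hQ0.le, ← Real.rpow_mul hQ0.le, ← Real.rpow_add hQ0]
        push_cast
        ring_nf

variable {β τ : ℝ} {N M : ℕ} {e : Option (Fin M) → ℝ}

lemma abs_ofDigits_sub_ofDigits_le_mul_rpow (hβ : 1 ≤ β) (he : ∀ a, IsLetter β N (e a))
    (hinj : Function.Injective e) (hτ : 0 < τ) (hM : (β ^ N) ^ τ ≤ M) {n : ℕ → ℕ} {C : ℕ}
    (hn : ∀ i : ℕ, τ * i ≤ n i + C) {u u' : ℕ → Fin M} {ω ω' : ℕ → Option (Fin M)}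
    (h : ∀ i, (∀ k < i, ω k = ω' k) → ∀ j < n i, u j = u' j) :
    |Real.ofDigits u - Real.ofDigits u'| ≤ M ^ C * (β ^ N) ^ (2 * τ ^ 2) *
      |code β N (fun i => e (ω i)) - code β N fun i => e (ω' i)| ^ (τ ^ 2) := by
  classical
  have hβ0 : 0 < β := by linarith
  by_cases hω : ∃ i, ω i ≠ ω' i
  · have hlt : ∀ k < Nat.find hω, ω k = ω' k := fun k hk => not_not.1 (Nat.find_min hω hk)
    calc |Real.ofDigits u - Real.ofDigits u'|
        ≤ ((M : ℝ) ^ n (Nat.find hω))⁻¹ := Real.abs_ofDigits_sub_ofDigits_le (h _ hlt)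
      _ ≤ M ^ C * (β ^ N) ^ (2 * τ ^ 2) * (1 / (β ^ N) ^ (Nat.find hω + 2)) ^ (τ ^ 2) :=
          inv_pow_le_mul_rpow (one_le_pow₀ hβ) hτ.le hM (hn _)
      _ ≤ _ := by
          gcongr
          exact one_div_pow_le_abs_code_sub_code hβ0 (fun i => he _) (fun i => he _)
            (fun k hk => congrArg e (hlt k hk)) (hinj.ne (Nat.find_spec hω))
  · push Not at hω
    have hu : u = u' := funext fun j => by
      obtain ⟨i, hi⟩ := exists_nat_gt ((j + C) / τ)
      rw [div_lt_iff₀' hτ] at hi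
      exact h i (fun k _ => hω k) j (by exact_mod_cast (by linarith [hn i] : (j : ℝ) < n i))
    rw [hu, sub_self, abs_zero]
    positivity

lemma two_le_dimH_range_prodMap_ofDigits (hM : 1 < M) :
    2 ≤ dimH (range (Prod.map (Real.ofDigits (b := M)) (Real.ofDigits (b := M)))) := by
  have hsub : Icc (0 : ℝ) 1 ⊆ range (Real.ofDigits (b := M)) := by
    simpa only [SurjOn, image_univ] using Real.ofDigits_SurjOn hM
  have hsquare : dimH (Icc (0 : ℝ) 1 ×ˢ Icc (0 : ℝ) 1) = 2 := by
    rw [Real.dimH_of_nonempty_interior] <;> simp [interior_prod_eq, -Icc_prod_Icc]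
  rw [← hsquare, range_prodMap]
  exact dimH_mono (prod_mono hsub hsub)

/-- The set `E_β(a, b)` of pairs with waiting time indicators `a` and `b`. -/
def waitingSet (β : ℝ) (a b : EReal) : Set (ℝ × ℝ) :=
  {p | p.1 ∈ Ico (0 : ℝ) 1 ∧ p.2 ∈ Ico (0 : ℝ) 1 ∧
    liminf (fun n => waitingRatio β p.1 p.2 n) atTop = a ∧
    limsup (fun n => waitingRatio β p.1 p.2 n) atTop = b}

/-- The pair of points coded by the host of the marked word of `v` with free letters `g`, and by the
marked word itself. -/
noncomputable def hostPair (β : ℝ) (N : ℕ) (e : Option (Fin M) → ℝ) (L P : ℕ → ℕ)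
    (σ : Fin M → Fin M) (w : (ℕ → Fin M) × (ℕ → Fin M)) : ℝ × ℝ :=
  (code β N fun i => e (hostWord L P σ w.2 w.1 i), code β N fun i => e (markedWord w.2 i))

variable {L P : ℕ → ℕ} {σ : Fin M → Fin M}

lemma range_hostPair_subset_waitingSet {a b : EReal} (hβ : 0 < β) (hN : 0 < N)
    (he : ∀ a, IsLetter β N (e a)) (hinj : Function.Injective e) (h0 : e none = 0)
    (hLP : IsInsertionScheme L P) (hab : HasWaitingExponents N L P a b) (hσ : ∀ a, σ a ≠ a) :
    range (hostPair β N e L P σ) ⊆ waitingSet β a b := by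
  rintro _ ⟨⟨g, v⟩, rfl⟩
  have hhost := isHost_hostWord hLP hσ v g
  exact ⟨code_mem_Ico hβ fun i => he _, code_mem_Ico hβ fun i => he _,
    hhost.liminf_waitingRatio hβ he hinj h0 hLP hN hab,
    hhost.limsup_waitingRatio hβ he hinj h0 hLP hN hab⟩

lemma exists_dist_ofDigits_le_mul_dist_hostPair_rpow (hβ : 1 ≤ β)
    (he : ∀ a, IsLetter β N (e a)) (hinj : Function.Injective e) (hτ : 0 < τ) (hτ1 : τ < 1)
    (hM : (β ^ N) ^ τ ≤ M) (hLP : IsInsertionScheme L P)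
    (hsparse : Tendsto (fun k => ((k + 1) * (L k + 1) : ℝ) / P k) atTop (𝓝 0)) :
    ∃ K : ℝ≥0, ∀ w w', dist (Prod.map (Real.ofDigits (b := M)) (Real.ofDigits (b := M)) w)
        (Prod.map Real.ofDigits Real.ofDigits w') ≤
      K * dist (hostPair β N e L P σ w) (hostPair β N e L P σ w') ^ (τ ^ 2) := by
  obtain ⟨C, hC⟩ := hLP.exists_le_count_isFree_add hsparse hτ1
  have : 0 < β := by linarith
  have hmono {z d : ℝ} (h : |z| ≤ d) : M ^ (C + 2) * (β ^ N) ^ (2 * τ ^ 2) * |z| ^ (τ ^ 2) ≤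
      M ^ (C + 2) * (β ^ N) ^ (2 * τ ^ 2) * d ^ (τ ^ 2) := by
    gcongr
  refine ⟨⟨M ^ (C + 2) * (β ^ N) ^ (2 * τ ^ 2), by positivity⟩, fun w w' => max_le ?_ ?_⟩
  · have hn (i : ℕ) : τ * i ≤ Nat.count (IsFree L P) i + (C + 2 : ℕ) := by
      push_cast
      linarith [hC i]
    exact (abs_ofDigits_sub_ofDigits_le_mul_rpow hβ he hinj hτ hM hn fun i h j hj =>
      eq_of_hostWord_eq (σ := σ) (v := w.2) (v' := w'.2) h hj).trans
        (hmono (le_max_left _ _))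
  · have hn (i : ℕ) : τ * i ≤ ((i - 2 : ℕ) : ℝ) + (C + 2 : ℕ) := by
      refine (mul_le_of_le_one_left i.cast_nonneg hτ1.le).trans ?_
      exact_mod_cast (by omega : i ≤ i - 2 + (C + 2))
    exact (abs_ofDigits_sub_ofDigits_le_mul_rpow hβ he hinj hτ hM hn fun i h j hj =>
      eq_of_markedWord_eq h hj).trans (hmono (le_max_right _ _))

lemma ofReal_two_mul_sq_le_dimH_waitingSet {a b : EReal} (hβ : 1 < β) (h0 : 0 ≤ a) (hab : a ≤ b)
    (hτ : 0 < τ) (hτ1 : τ < 1) : ENNReal.ofReal (2 * τ ^ 2) ≤ dimH (waitingSet β a b) := by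
  obtain ⟨N, M, hN, hM, hcard, e, hinj, hnone, he⟩ := exists_injective_isLetter hβ hτ1
  obtain ⟨L, P, hLP, hexp, hsparse⟩ := exists_isInsertionScheme hN h0 hab
  have : Nontrivial (Fin M) := Fin.nontrivial_iff_two_le.2 hM
  choose σ hσ using fun a : Fin M => exists_ne a
  obtain ⟨K, hK⟩ := exists_dist_ofDigits_le_mul_dist_hostPair_rpow (σ := σ) hβ.le he hinj hτ hτ1
    hcard hLP hsparse
  have hr : 0 < (τ ^ 2).toNNReal := Real.toNNReal_pos.2 (by positivity)
  have hdim : 2 ≤ dimH (range (hostPair β N e L P σ)) / (τ ^ 2).toNNReal :=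
    (two_le_dimH_range_prodMap_ofDigits hM).trans <| dimH_range_le_of_dist_le_rpow hr <| by
      simpa only [Real.coe_toNNReal _ (sq_nonneg τ)] using hK
  calc ENNReal.ofReal (2 * τ ^ 2) = 2 * (τ ^ 2).toNNReal := by
        rw [ENNReal.ofReal_mul zero_le_two, ENNReal.ofReal_ofNat, ENNReal.ofReal]
    _ ≤ dimH (range (hostPair β N e L P σ)) := ENNReal.mul_le_of_le_div hdim
    _ ≤ dimH (waitingSet β a b) :=
        dimH_mono (range_hostPair_subset_waitingSet (by linarith) hN he hinj hnone hLP hexp hσ)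

end Dimension

end BetaExpansion

/-- The planar waiting set E_β(a,b) has Hausdorff dimension 2 for any 0 ≤ a ≤ b ≤ ∞. -/
theorem dimH_waiting_set (β : ℝ) (hβ : 1 < β) (a b : EReal) (h0 : 0 ≤ a) (hab : a ≤ b) :
    dimH {p : ℝ × ℝ | p.1 ∈ Set.Ico (0:ℝ) 1 ∧ p.2 ∈ Set.Ico (0:ℝ) 1 ∧
      Filter.liminf (fun n => waitingRatio β p.1 p.2 n) Filter.atTop = a ∧
      Filter.limsup (fun n => waitingRatio β p.1 p.2 n) Filter.atTop = b} = 2 := by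
  change dimH (BetaExpansion.waitingSet β a b) = 2
  apply le_antisymm
  · calc dimH (BetaExpansion.waitingSet β a b)
        ≤ dimH (univ : Set (ℝ × ℝ)) := dimH_mono (subset_univ _)
      _ = 2 := by simp [Real.dimH_univ_eq_finrank]
  · have hlim : Tendsto (fun τ : ℝ => ENNReal.ofReal (2 * τ ^ 2)) (nhdsWithin 1 (Iio 1))
        (nhds 2) := by
      have hcont : Continuous fun τ : ℝ => ENNReal.ofReal (2 * τ ^ 2) :=
        ENNReal.continuous_ofReal.comp (by fun_prop)
      simpa using (hcont.tendsto 1).mono_left nhdsWithin_le_nhds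
    refine le_of_tendsto hlim ?_
    filter_upwards [Ioo_mem_nhdsLT zero_lt_one] with τ hτ
    exact BetaExpansion.ofReal_two_mul_sq_le_dimH_waitingSet hβ h0 hab hτ.1 hτ.2
end
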